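/- If there exists a recoverable wait-free binary consensus algorithm for n > 1 processes using objects of deterministic readable types 𝒯_0, 𝒯_1, 𝒯_2, … together with registers, then at least one of the types 𝒯_i has recoverable consensus number at least n; that is, the recoverable consensus hierarchy is robust for deterministic readable types. -/

import Mathlib

/-!
The proof characterizes solvability by `n`-recording objects: an object value `u`, two teams of
processes and one operation per process such that the value reached from `u` by letting each
process apply its operation at most once records the team of the first process, and such that `u`
itself can be restored only against a team consisting of a single process.

*Necessity.* Call an execution budgeted if in each of its prefixes each process crashes at most
twice per step of a process with smaller index. A bivalent execution has a critical extension with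
respect to budgeted extensions, because an infinite budgeted execution leaves the lowest process
with infinitely many steps only finitely many crashes, so that it has to decide. In a critical
configuration all processes are poised at the same object, and the valencies of their steps define
two teams. If this object is not `n`-recording, some schedule of single steps followed by a crash
of all processes from some index `K` on leads to an execution that is bivalent again although the
processes from `K` on are univalent by themselves. Iterating this gives an infinite execution
without decisions; as `K` drops as long as only processes from `K` on take part, beyond the limit
inferior of these indices there is again a process with infinitely many steps and finitely many
crashes, a contradiction. Since registers are never `n`-recording, one of the given types is.

*Sufficiency.* With a readable `n`-recording type, two teams, each of which agrees internally on a
value, reach consensus: announce the value of the team in a register, read the object, apply the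
recording operation only if the object still has the value `u`, read again and adopt the value of
the recorded team. If `u` itself records the opposite team, the process, which is then alone in its
team, first checks whether the opposite team has announced a value, and if so adopts it. A
recovering process may repeat all this, since it applies its operation only after reading the value
`u`. Arranging the teams in a binary tree, so that any two processes are separated at some node,
yields consensus among all processes: a process ascends from its leaf to the root.
-/

namespace RecoverableConsensus

/-- A deterministic object type: a set of values, operations and responses together with a
transition function assigning to each (value, operation) pair a unique response and a unique
resulting value. -/
structure DetType : Type 1 where
  Value : Type
  Op : Type
  Resp : Type
  δ : Value → Op → Resp × Value

/-- A type is readable if it has a Read operation that returns (an injective encoding of)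
the current value of the object without changing it. -/
def Readable (T : DetType) : Prop :=
  ∃ (read : T.Op) (ι : T.Value → T.Resp),
    Function.Injective ι ∧ ∀ v, T.δ v read = (ι v, v)

/-- The register type over the value set `V`: the operation `none` is Read (returning the
current value without changing it) and `some v` is Write(v) (changing the value to `v`). -/
def RegisterType (V : Type) : DetType where
  Value := V
  Op := Option V
  Resp := V
  δ := fun u op =>
    match op with
    | none => (u, u)
    | some v => (v, v)

def IsRegister (T : DetType) : Prop := ∃ V : Type, T = RegisterType V

/-- An event is either a step by a process or a crash of a process. -/
inductive Event (n : ℕ) : Type where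
  | step : Fin n → Event n
  | crash : Fin n → Event n
deriving DecidableEq

/-- An algorithm for `n` processes: a collection of shared objects, each with a deterministic
type and an initial value, and for each process a deterministic state machine with an initial
state depending on the process's binary input.  Each state determines the process's next step
(`pending`: an operation applied to a designated object, or `none` for a no-op); the state
reached after a step is determined by the current state and the response received (`next`).
`output i s = some v` means that `s` is an output state of process `i` for the value `v`;
processes in output states take only no-op steps. -/
structure Algorithm (n : ℕ) : Type 1 where
  ObjIdx : Type
  objType : ObjIdx → DetType
  objInit : (o : ObjIdx) → (objType o).Value
  PState : Fin n → Type
  init : (i : Fin n) → Bool → PState i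
  pending : (i : Fin n) → PState i → Option ((o : ObjIdx) × (objType o).Op)
  next : (i : Fin n) → PState i → (o : ObjIdx) → (objType o).Resp → PState i
  output : (i : Fin n) → PState i → Option Bool
  output_noop : ∀ i s, output i s ≠ none → pending i s = none

/-- A configuration assigns a state to each process and a value to each object. -/
structure Config {n : ℕ} (A : Algorithm n) : Type where
  pstate : (i : Fin n) → A.PState i
  oval : (o : A.ObjIdx) → (A.objType o).Value

variable {n : ℕ}

/-- The effect of one event on a configuration.  A crash of `p_i` resets `p_i` to its initial
state (for its input) and leaves all object values unchanged; a step of `p_i` applies its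
pending operation (if any) to the designated object, receiving the response determined by the
type's transition function. -/
noncomputable def applyEvent (A : Algorithm n) (input : Fin n → Bool) (C : Config A) :
    Event n → Config A
  | .crash i => { C with pstate := Function.update C.pstate i (A.init i (input i)) }
  | .step i =>
    letI : DecidableEq A.ObjIdx := Classical.decEq _
    match A.pending i (C.pstate i) with
    | none => C
    | some ⟨o, op⟩ =>
      { pstate := Function.update C.pstate i
          (A.next i (C.pstate i) o ((A.objType o).δ (C.oval o) op).1),
        oval := Function.update C.oval o ((A.objType o).δ (C.oval o) op).2 }

/-- Since the algorithm is deterministic, a finite execution from `C` is determined by its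
schedule, i.e. its list of events; `run A input C σ` is the configuration `Cσ` reached by
applying the events of `σ` in order from `C`. -/
noncomputable def run (A : Algorithm n) (input : Fin n → Bool) (C : Config A) :
    List (Event n) → Config A
  | [] => C
  | e :: σ => run A input (applyEvent A input C e) σ

/-- The initial configuration: every process in its initial state, every object at its
initial value. -/
def initConfig (A : Algorithm n) (input : Fin n → Bool) : Config A :=
  ⟨fun i => A.init i (input i), A.objInit⟩

/-- Process `i` has decided `v` in `Cσ`: at some point along the execution `σ` from `C`,
process `i` was in an output state for `v`. -/
def HasDecided (A : Algorithm n) (input : Fin n → Bool) (C : Config A)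
    (σ : List (Event n)) (i : Fin n) (v : Bool) : Prop :=
  ∃ τ, τ <+: σ ∧ A.output i ((run A input C τ).pstate i) = some v

def CrashFree (σ : List (Event n)) : Prop := ∀ i : Fin n, Event.crash i ∉ σ

/-- The first `k` events of an infinite execution. -/
def initSeg (e : ℕ → Event n) (k : ℕ) : List (Event n) := (List.range k).map e

/-- Agreement: in every execution no two processes decide different values. -/
def Agreement (A : Algorithm n) : Prop :=
  ∀ (input : Fin n → Bool) (σ : List (Event n)) (i j : Fin n) (v w : Bool),
    HasDecided A input (initConfig A input) σ i v →
    HasDecided A input (initConfig A input) σ j w → v = w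

/-- Validity: every decided value is the input of some process. -/
def Validity (A : Algorithm n) : Prop :=
  ∀ (input : Fin n → Bool) (σ : List (Event n)) (i : Fin n) (v : Bool),
    HasDecided A input (initConfig A input) σ i v → ∃ j, input j = v

/-- Recoverable wait-freedom: every process, starting from its initial state, either crashes
or decides within a finite number of its own steps.  Equivalently: in every infinite execution
in which process `i` starts at (or is reset by a crash to) its initial state, takes infinitely
many steps and crashes only finitely often, it eventually reaches an output state. -/
def RecWaitFree (A : Algorithm n) : Prop :=
  ∀ (input : Fin n → Bool) (C : Config A) (e : ℕ → Event n) (i : Fin n),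
    (C.pstate i = A.init i (input i) ∨ ∃ k, e k = Event.crash i) →
    (∀ m, ∃ k, m ≤ k ∧ e k = Event.step i) →
    (∃ m, ∀ k, m ≤ k → e k ≠ Event.crash i) →
    ∃ (k : ℕ) (v : Bool), A.output i ((run A input C (initSeg e k)).pstate i) = some v

/-- A recoverable wait-free binary consensus algorithm. -/
def SolvesRecConsensus (A : Algorithm n) : Prop :=
  Agreement A ∧ Validity A ∧ RecWaitFree A

/-- Agreement restricted to crash-free executions. -/
def AgreementCF (A : Algorithm n) : Prop :=
  ∀ (input : Fin n → Bool) (σ : List (Event n)), CrashFree σ →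
    ∀ (i j : Fin n) (v w : Bool),
      HasDecided A input (initConfig A input) σ i v →
      HasDecided A input (initConfig A input) σ j w → v = w

/-- Validity restricted to crash-free executions. -/
def ValidityCF (A : Algorithm n) : Prop :=
  ∀ (input : Fin n → Bool) (σ : List (Event n)), CrashFree σ →
    ∀ (i : Fin n) (v : Bool),
      HasDecided A input (initConfig A input) σ i v → ∃ j, input j = v

/-- Wait-freedom: in crash-free executions, every process that takes infinitely many steps
decides. -/
def WaitFree (A : Algorithm n) : Prop :=
  ∀ (input : Fin n → Bool) (e : ℕ → Event n),
    (∀ (k : ℕ) (i : Fin n), e k ≠ Event.crash i) →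
    ∀ i : Fin n, (∀ m, ∃ k, m ≤ k ∧ e k = Event.step i) →
    ∃ (k : ℕ) (v : Bool),
      A.output i ((run A input (initConfig A input) (initSeg e k)).pstate i) = some v

/-- A wait-free binary consensus algorithm (for the model in which crashes are permanent,
i.e. only crash-free executions are relevant). -/
def SolvesWFConsensus (A : Algorithm n) : Prop :=
  AgreementCF A ∧ ValidityCF A ∧ WaitFree A

/-- The number of crashes of process `i` in `σ`. -/
def crashCount (i : Fin n) (σ : List (Event n)) : ℕ :=
  (σ.filter fun e => decide (e = Event.crash i)).length

def isStepBelow (i : Fin n) : Event n → Bool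
  | .step j => decide (j < i)
  | .crash _ => false

/-- The total number of steps taken by processes `p_0, …, p_{i-1}` in `σ`. -/
def stepsBelow (i : Fin n) (σ : List (Event n)) : ℕ := (σ.filter (isStepBelow i)).length

/-- The crash bound: for every process `p_i`, the number of crashes of `p_i` is at most
`z·n` times the total number of steps of `p_0, …, p_{i-1}` (for `i = 0` this says that `p_0`
never crashes). -/
def EMem (z : ℕ) (σ : List (Event n)) : Prop :=
  ∀ i : Fin n, crashCount i σ ≤ z * n * stepsBelow i σ

/-- `𝓔_z`: executions satisfying the crash bound. -/
def ESet (n z : ℕ) : Set (List (Event n)) := { σ | EMem z σ }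

/-- `𝓔*_z`: executions satisfying the crash bound in every prefix. -/
def EStarSet (n z : ℕ) : Set (List (Event n)) := { σ | ∀ τ, τ <+: σ → EMem z τ }

/-- `e` is an event by a process in `P`. -/
def eventBy (P : Set (Fin n)) : Event n → Prop
  | .step i => i ∈ P
  | .crash i => i ∈ P

/-- The set of processes `P` is `v`-univalent in the execution `α` from `C` with respect to
the set of executions `𝒜`. -/
def VUnivalentIn (A : Algorithm n) (input : Fin n → Bool) (C : Config A)
    (𝒜 : Set (List (Event n))) (P : Set (Fin n)) (α : List (Event n)) (v : Bool) : Prop :=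
  α ∈ 𝒜 ∧ ∀ β : List (Event n), (∀ e ∈ β, eventBy P e) → (α ++ β) ∈ 𝒜 →
    ∀ (i : Fin n) (w : Bool), HasDecided A input C (α ++ β) i w → w = v

/-- The set of processes `P` is bivalent in the execution `α` from `C` with respect to `𝒜`. -/
def BivalentIn (A : Algorithm n) (input : Fin n → Bool) (C : Config A)
    (𝒜 : Set (List (Event n))) (P : Set (Fin n)) (α : List (Event n)) : Prop :=
  ∀ v : Bool, ∃ β : List (Event n), (∀ e ∈ β, eventBy P e) ∧ (α ++ β) ∈ 𝒜 ∧
    ∃ i : Fin n, HasDecided A input C (α ++ β) i v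

/-- `P` is univalent in `α` with respect to `𝒜`: `v`-univalent for some `v`. -/
def UnivalentIn (A : Algorithm n) (input : Fin n → Bool) (C : Config A)
    (𝒜 : Set (List (Event n))) (P : Set (Fin n)) (α : List (Event n)) : Prop :=
  ∃ v : Bool, VUnivalentIn A input C 𝒜 P α v

/-- `α ∈ 𝒜` is critical with respect to `𝒜`: `α` is bivalent with respect to `𝒜` and every
nonempty extension of `α` inside `𝒜` is univalent with respect to `𝒜`. -/
def Critical (A : Algorithm n) (input : Fin n → Bool) (C : Config A)
    (𝒜 : Set (List (Event n))) (α : List (Event n)) : Prop :=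
  α ∈ 𝒜 ∧ BivalentIn A input C 𝒜 Set.univ α ∧
  ∀ β : List (Event n), β ≠ [] → (α ++ β) ∈ 𝒜 → UnivalentIn A input C 𝒜 Set.univ (α ++ β)

/-- Process `i` is on team `v` in `Cα` (with respect to `𝒜`): `α p_i` is `v`-univalent. -/
def OnTeam (A : Algorithm n) (input : Fin n → Bool) (C : Config A)
    (𝒜 : Set (List (Event n))) (α : List (Event n)) (i : Fin n) (v : Bool) : Prop :=
  VUnivalentIn A input C 𝒜 Set.univ (α ++ [Event.step i]) v

/-- Process `i` is poised to apply an operation to object `O` in configuration `C`. -/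
def PoisedAt (A : Algorithm n) (C : Config A) (i : Fin n) (O : A.ObjIdx) : Prop :=
  ∃ op, A.pending i (C.pstate i) = some ⟨O, op⟩

/-- `σ ∈ 𝒮(P)`: a crash-free schedule in which each process of `P` takes at most one step
and no other process takes a step. -/
def IsSched (P : Set (Fin n)) (σ : List (Event n)) : Prop :=
  ∃ l : List (Fin n), l.Nodup ∧ (∀ j ∈ l, j ∈ P) ∧ σ = l.map Event.step

/-- The schedule `λ_k = c_k c_{k+1} ⋯ c_{n-1}`. -/
def lambdaSched (n k : ℕ) : List (Event n) :=
  ((List.finRange n).filter fun j => decide (k ≤ j.val)).map Event.crash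

/-- `U_v`: the set of values of object `O` reachable from `Dα` by a schedule in `𝒮(𝒫)`
whose first process is on team `v`. -/
def USetCfg (A : Algorithm n) (input : Fin n → Bool) (D : Config A)
    (𝒜 : Set (List (Event n))) (α : List (Event n)) (O : A.ObjIdx) (v : Bool) :
    Set (A.objType O).Value :=
  { w | ∃ (j : Fin n) (σ : List (Event n)), OnTeam A input D 𝒜 α j v ∧
        IsSched {k : Fin n | k ≠ j} σ ∧
        w = (run A input D (α ++ Event.step j :: σ)).oval O }

/-- The configuration `Dα` is `v`-hiding. -/
def VHiding (A : Algorithm n) (input : Fin n → Bool) (D : Config A)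
    (𝒜 : Set (List (Event n))) (α : List (Event n)) (O : A.ObjIdx) (v : Bool) : Prop :=
  USetCfg A input D 𝒜 α O false ∩ USetCfg A input D 𝒜 α O true = ∅ ∧
  (run A input D α).oval O ∈ USetCfg A input D 𝒜 α O v

/-- The configuration `Dα` is `n`-recording. -/
def NRecordingCfg (A : Algorithm n) (input : Fin n → Bool) (D : Config A)
    (𝒜 : Set (List (Event n))) (α : List (Event n)) (O : A.ObjIdx) : Prop :=
  USetCfg A input D 𝒜 α O false ∩ USetCfg A input D 𝒜 α O true = ∅ ∧
  ∀ v : Bool, (run A input D α).oval O ∈ USetCfg A input D 𝒜 α O v →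
    ∃! j : Fin n, OnTeam A input D 𝒜 α j (!v)

/-- Apply the operations `o i` of the processes listed in `σ`, in order, to an object of type
`T`, starting from the value `u`. -/
def applyOps (T : DetType) (o : Fin n → T.Op) : T.Value → List (Fin n) → T.Value
  | u, [] => u
  | u, i :: σ => applyOps T o (T.δ u (o i)).2 σ

/-- `U_x`: the set of values obtainable by applying the operations of the processes of a
duplicate-free schedule whose first process is on team `x` to an object with initial value
`u`. -/
def UVals (T : DetType) (o : Fin n → T.Op) (u : T.Value) (team : Fin n → Bool) (x : Bool) :
    Set T.Value :=
  { v | ∃ (i : Fin n) (σ : List (Fin n)), team i = x ∧ (i :: σ).Nodup ∧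
        v = applyOps T o u (i :: σ) }

/-- A deterministic type `T` is `n`-recording. -/
def NRecording (n : ℕ) (T : DetType) : Prop :=
  ∃ (u : T.Value) (team : Fin n → Bool) (o : Fin n → T.Op),
    (∀ x : Bool, ∃ i, team i = x) ∧
    (UVals T o u team false ∩ UVals T o u team true = ∅) ∧
    (∀ x : Bool, u ∈ UVals T o u team x → ∃! i, team i = !x)

end RecoverableConsensus

namespace RecoverableConsensus

/-- The type `T` has recoverable consensus number at least `n`: there is a recoverable
wait-free binary consensus algorithm for `n` processes using objects of type `T` together
with registers. -/
def RecConsensusNumberGe (n : ℕ) (T : DetType) : Prop :=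
  ∃ A : Algorithm n,
    (∀ o : A.ObjIdx, A.objType o = T ∨ IsRegister (A.objType o)) ∧ SolvesRecConsensus A

end RecoverableConsensus

namespace RecoverableConsensus

variable {n : ℕ}

/-! ### Crash budgets -/

section Schedules

/-- The executions in which, at every moment, each process has crashed at most twice per step of
a process with smaller index, not counting `s i` extra crashes granted to process `i`. Without
extra crashes these are the executions `𝓔*_z` with `2` in place of `z * n`. -/
def CrashBudget (s : Fin n → ℕ) (β : List (Event n)) : Prop :=
  ∀ τ, τ <+: β → ∀ i, crashCount i τ ≤ 2 * stepsBelow i τ + s i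

/-- The allowance of `c` extra crashes for each of the processes `p_k, …, p_{n-1}`. -/
def crashSlack (k c : ℕ) : Fin n → ℕ := fun i => if k ≤ i.val then c else 0

/-- The set of processes `{p_k, …, p_{n-1}}`. -/
def processesFrom (n k : ℕ) : Set (Fin n) := {i | k ≤ i.val}

lemma crashCount_append (i : Fin n) (σ τ : List (Event n)) :
    crashCount i (σ ++ τ) = crashCount i σ + crashCount i τ := by
  simp [crashCount]

lemma stepsBelow_append (i : Fin n) (σ τ : List (Event n)) :
    stepsBelow i (σ ++ τ) = stepsBelow i σ + stepsBelow i τ := by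
  simp [stepsBelow]

lemma crashCount_eq_count (i : Fin n) (σ : List (Event n)) :
    crashCount i σ = σ.count (Event.crash i) := by
  simp [crashCount, List.count, List.countP_eq_length_filter, beq_eq_decide]

lemma crashCount_pos_iff {i : Fin n} {σ : List (Event n)} :
    0 < crashCount i σ ↔ Event.crash i ∈ σ := by
  rw [crashCount_eq_count, List.count_pos_iff]

lemma crashCount_le_of_prefix {σ τ : List (Event n)} (h : σ <+: τ) (i : Fin n) :
    crashCount i σ ≤ crashCount i τ := by
  simpa only [crashCount_eq_count] using h.count_le _

lemma stepsBelow_pos_iff {i : Fin n} {σ : List (Event n)} :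
    0 < stepsBelow i σ ↔ ∃ j < i, Event.step j ∈ σ := by
  rw [stepsBelow, ← List.countP_eq_length_filter, List.countP_pos_iff]
  constructor
  · rintro ⟨⟨j⟩ | ⟨j⟩, hj, hji⟩
    · exact ⟨j, by simpa [isStepBelow] using hji, hj⟩
    · simp [isStepBelow] at hji
  · rintro ⟨j, hji, hj⟩
    exact ⟨_, hj, by simpa [isStepBelow] using hji⟩

lemma CrashFree.crashCount {σ : List (Event n)} (h : CrashFree σ) (i : Fin n) :
    crashCount i σ = 0 :=
  Nat.eq_zero_of_not_pos fun hpos => h i (crashCount_pos_iff.1 hpos)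

lemma crashFree_steps (l : List (Fin n)) : CrashFree (l.map Event.step) := by
  simp [CrashFree]

lemma crashFree_replicate (m : ℕ) (i : Fin n) : CrashFree (List.replicate m (Event.step i)) := by
  simp [CrashFree, List.mem_replicate]

lemma crashFree_append {σ τ : List (Event n)} (hσ : CrashFree σ) (hτ : CrashFree τ) :
    CrashFree (σ ++ τ) :=
  fun i h => (List.mem_append.1 h).elim (hσ i) (hτ i)

lemma CrashFree.crashBudget {β : List (Event n)} (h : CrashFree β) (s : Fin n → ℕ) :
    CrashBudget s β := fun τ hτ i => by
  have := crashCount_le_of_prefix hτ i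
  have := h.crashCount i
  omega

namespace CrashBudget

variable {s s' : Fin n → ℕ} {α β : List (Event n)}

protected lemma crashCount_le (h : CrashBudget s β) (i : Fin n) :
    crashCount i β ≤ 2 * stepsBelow i β + s i := h β List.prefix_rfl i

protected lemma mono (h : CrashBudget s β) (hs : ∀ i, s i ≤ s' i) : CrashBudget s' β :=
  fun τ hτ i => (h τ hτ i).trans (Nat.add_le_add_left (hs i) _)

protected lemma of_prefix (h : CrashBudget s β) (hα : α <+: β) : CrashBudget s α :=
  fun τ hτ => h τ (hτ.trans hα)

protected lemma append (hα : CrashBudget s α) (hβ : CrashBudget s' β)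
    (h : ∀ i, s' i + crashCount i α ≤ 2 * stepsBelow i α + s i) : CrashBudget s (α ++ β) := by
  intro τ hτ i
  rcases List.prefix_or_prefix_of_prefix hτ (List.prefix_append α β) with hτα | ⟨ρ, rfl⟩
  · exact hα τ hτα i
  · rw [crashCount_append, stepsBelow_append]
    have := hβ ρ ((List.prefix_append_right_inj α).1 hτ) i
    have := h i
    omega

protected lemma append_zero (hα : CrashBudget s α) (hβ : CrashBudget 0 β) :
    CrashBudget s (α ++ β) := by
  refine (hα.append (s' := fun i => s i + 2 * stepsBelow i α - crashCount i α)
    (hβ.mono fun i => Nat.zero_le _)) fun i => ?_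
  have := hα.crashCount_le i
  omega

end CrashBudget

lemma crashCount_lambdaSched_le (k : ℕ) (i : Fin n) :
    crashCount i (lambdaSched n k) ≤ crashSlack k 1 i := by
  rw [crashCount_eq_count, crashSlack]
  split_ifs with h
  · refine List.nodup_iff_count_le_one.1 (List.Nodup.map (fun a b h => ?_) ?_) _
    · injection h
    · exact (List.nodup_finRange n).filter _
  · rw [Nat.le_zero, List.count_eq_zero]
    simpa [lambdaSched] using Nat.not_le.1 h

lemma crashBudget_lambdaSched (k : ℕ) : CrashBudget (crashSlack k 1) (lambdaSched n k) :=
  fun τ hτ i => by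
    have := crashCount_le_of_prefix hτ i
    have := crashCount_lambdaSched_le k i
    omega

lemma eventBy_lambdaSched {K k : ℕ} (hKk : K ≤ k) :
    ∀ e ∈ lambdaSched n k, eventBy (processesFrom n K) e := by
  intro e he
  simp only [lambdaSched, List.mem_map, List.mem_filter, decide_eq_true_eq] at he
  obtain ⟨j, ⟨-, hj⟩, rfl⟩ := he
  exact hKk.trans hj

lemma eventBy_replicate {P : Set (Fin n)} {i : Fin n} (hi : i ∈ P) (m : ℕ) :
    ∀ e ∈ List.replicate m (Event.step i), eventBy P e :=
  fun _ he => List.eq_of_mem_replicate he ▸ hi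

/-- The step of `p_j` buys two crashes of each of `p_k, …, p_{n-1}`: one is spent on `λ_k`, the
other one is left for `β`. -/
lemma CrashBudget.steps_lambdaSched_append {k : ℕ} {l : List (Fin n)} {j : Fin n} (hj : j ∈ l)
    (hjk : j.val < k) {β : List (Event n)} (hβ : CrashBudget (crashSlack k 1) β) :
    CrashBudget 0 (l.map Event.step ++ (lambdaSched n k ++ β)) := by
  refine ((crashFree_steps l).crashBudget 0).append (s' := crashSlack k 2) ?_ fun i => ?_
  · refine ((crashBudget_lambdaSched k).mono fun i => ?_).append hβ fun i => ?_
    · simp only [crashSlack]; split_ifs <;> omega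
    · have := crashCount_lambdaSched_le k i
      simp only [crashSlack] at *
      split_ifs at * <;> omega
  · rw [(crashFree_steps l).crashCount, crashSlack, Pi.zero_apply]
    split_ifs with hi
    · have : 0 < stepsBelow i (l.map Event.step) :=
        stepsBelow_pos_iff.2 ⟨j, Fin.lt_def.2 (hjk.trans_le hi), List.mem_map_of_mem hj⟩
      omega
    · simp

lemma CrashBudget.append_lambdaSched {K k : ℕ} (hKk : K ≤ k) {α : List (Event n)}
    (hα : CrashBudget 0 α) : CrashBudget (crashSlack K 1) (α ++ lambdaSched n k) := by
  refine (hα.mono fun i => Nat.zero_le _).append (s' := crashSlack K 1) ?_ fun i => ?_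
  · refine (crashBudget_lambdaSched k).mono fun i => ?_
    simp only [crashSlack]; split_ifs <;> omega
  · have := hα.crashCount_le i
    rw [Pi.zero_apply] at this
    omega

/-- The executions extending `δ` that keep to the crash budget `s`, counted from the end of `δ`. -/
def budgeted (s : Fin n → ℕ) (δ : List (Event n)) : Set (List (Event n)) :=
  {σ | ∃ β, CrashBudget s β ∧ δ ++ β = σ}

lemma append_mem_budgeted_iff {s : Fin n → ℕ} {δ β : List (Event n)} :
    δ ++ β ∈ budgeted s δ ↔ CrashBudget s β := by
  simp [budgeted]

lemma mem_budgeted_self (s : Fin n → ℕ) (δ : List (Event n)) : δ ∈ budgeted s δ :=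
  ⟨[], (crashFree_steps []).crashBudget s, List.append_nil δ⟩

lemma append_mem_budgeted {s : Fin n → ℕ} {δ σ β : List (Event n)} (hσ : σ ∈ budgeted s δ)
    (hβ : CrashBudget 0 β) : σ ++ β ∈ budgeted s δ := by
  obtain ⟨α, hα, rfl⟩ := hσ
  exact ⟨α ++ β, hα.append_zero hβ, (List.append_assoc _ _ _).symm⟩

lemma mem_budgeted_of_prefix {s : Fin n → ℕ} {δ σ τ : List (Event n)} (hσ : σ ∈ budgeted s δ)
    (hτ : τ ∈ budgeted s δ) {ρ : List (Event n)} (hσρ : σ <+: ρ) (hρτ : ρ <+: τ) :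
    ρ ∈ budgeted s δ := by
  obtain ⟨α, -, rfl⟩ := hσ
  obtain ⟨γ, hγ, rfl⟩ := hτ
  obtain ⟨β, rfl⟩ := hσρ
  rw [List.append_assoc] at hρτ ⊢
  exact ⟨α ++ β, hγ.of_prefix ((List.prefix_append_right_inj δ).1 hρτ), rfl⟩

end Schedules

/-! ### Runs and indistinguishability -/

section Runs

variable {A : Algorithm n} (input : Fin n → Bool)

lemma run_append (C : Config A) (σ τ : List (Event n)) :
    run A input C (σ ++ τ) = run A input (run A input C σ) τ := by
  induction σ generalizing C with
  | nil => rfl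
  | cons _ _ ih => exact ih _

lemma applyEvent_of_pending_none {C : Config A} {i : Fin n}
    (h : A.pending i (C.pstate i) = none) : applyEvent A input C (.step i) = C := by
  simp [applyEvent, h]

open scoped Classical in
lemma applyEvent_of_pending_some {C : Config A} {i : Fin n} {o : A.ObjIdx}
    {op : (A.objType o).Op} (h : A.pending i (C.pstate i) = some ⟨o, op⟩) :
    applyEvent A input C (.step i) =
      { pstate := Function.update C.pstate i
          (A.next i (C.pstate i) o ((A.objType o).δ (C.oval o) op).1),
        oval := Function.update C.oval o ((A.objType o).δ (C.oval o) op).2 } := by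
  simp only [applyEvent, h]

lemma applyEvent_of_pending_read {C : Config A} {i : Fin n} {o : A.ObjIdx}
    {op : (A.objType o).Op} {r : (A.objType o).Resp} (h : A.pending i (C.pstate i) = some ⟨o, op⟩)
    (hread : (A.objType o).δ (C.oval o) op = (r, C.oval o)) :
    applyEvent A input C (.step i) =
      { C with pstate := Function.update C.pstate i (A.next i (C.pstate i) o r) } := by
  classical
  rw [applyEvent_of_pending_some input h, hread, Function.update_eq_self]

lemma applyEvent_pstate_of_not_eventBy {C : Config A} {e : Event n} {j : Fin n}
    (h : ¬ eventBy {j} e) : (applyEvent A input C e).pstate j = C.pstate j := by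
  cases e with
  | crash i => exact Function.update_of_ne (Ne.symm h) _ _
  | step i =>
    cases hp : A.pending i (C.pstate i) with
    | none => rw [applyEvent_of_pending_none input hp]
    | some x =>
      rw [applyEvent_of_pending_some input hp]
      exact Function.update_of_ne (Ne.symm h) _ _

lemma pending_applyEvent_step {C : Config A} {i j : Fin n} (hij : i ≠ j) :
    A.pending j ((applyEvent A input C (.step i)).pstate j) = A.pending j (C.pstate j) := by
  rw [applyEvent_pstate_of_not_eventBy input (e := .step i) hij]

/-- `C` and `C'` are indistinguishable to the processes in `P`: these have the same states in both
configurations, and all objects have the same values. -/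
def Config.Agree (P : Set (Fin n)) (C C' : Config A) : Prop :=
  C.oval = C'.oval ∧ ∀ j ∈ P, C.pstate j = C'.pstate j

namespace Config.Agree

variable {P : Set (Fin n)} {C C' : Config A}

protected lemma applyEvent (h : C.Agree P C') {e : Event n} (he : eventBy P e) :
    (applyEvent A input C e).Agree P (applyEvent A input C' e) := by
  obtain ⟨ps, ov⟩ := C
  obtain ⟨ps', ov'⟩ := C'
  obtain ⟨rfl, hps⟩ := h
  have hupd (i : Fin n) (s : A.PState i) : ∀ j ∈ P,
      Function.update ps i s j = Function.update ps' i s j := fun j hj => by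
    rcases eq_or_ne j i with rfl | hji
    · simp only [Function.update_self]
    · simpa only [Function.update_of_ne hji] using hps j hj
  cases e with
  | crash i => exact ⟨rfl, hupd i _⟩
  | step i =>
    have hi : ps i = ps' i := hps i he
    cases hp : A.pending i (ps i) with
    | none =>
      rw [applyEvent_of_pending_none input (C := ⟨ps, ov⟩) hp,
        applyEvent_of_pending_none input (C := ⟨ps', ov⟩) (by simpa only [hi] using hp)]
      exact ⟨rfl, hps⟩
    | some x =>
      rw [applyEvent_of_pending_some input (C := ⟨ps, ov⟩) hp,
        applyEvent_of_pending_some input (C := ⟨ps', ov⟩) (by simpa only [hi] using hp)]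
      simp only [hi]
      exact ⟨rfl, hupd i _⟩

protected lemma run (h : C.Agree P C') {β : List (Event n)} (hβ : ∀ e ∈ β, eventBy P e) :
    (run A input C β).Agree P (run A input C' β) := by
  induction β generalizing C C' with
  | nil => exact h
  | cons e β ih =>
    obtain ⟨he, hβ⟩ := List.forall_mem_cons.1 hβ
    exact ih (h.applyEvent input he) hβ

end Config.Agree

lemma run_crashes (C : Config A) (l : List (Fin n)) :
    (run A input C (l.map Event.crash)).oval = C.oval ∧
    (∀ j ∈ l, (run A input C (l.map Event.crash)).pstate j = A.init j (input j)) ∧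
    (∀ j, j ∉ l → (run A input C (l.map Event.crash)).pstate j = C.pstate j) := by
  induction l generalizing C with
  | nil => simp [run]
  | cons i l ih =>
    obtain ⟨hoval, hmem, hnmem⟩ := ih (applyEvent A input C (.crash i))
    refine ⟨hoval, fun j hj => ?_, fun j hj => ?_⟩
    · by_cases hjl : j ∈ l
      · exact hmem j hjl
      · obtain rfl : j = i := (List.mem_cons.1 hj).resolve_right hjl
        exact (hnmem j hjl).trans (Function.update_self _ _ _)
    · simp only [List.mem_cons, not_or] at hj
      obtain ⟨hji, hjl⟩ := hj
      exact (hnmem j hjl).trans (Function.update_of_ne hji _ _)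

lemma run_lambdaSched (C : Config A) (k : ℕ) :
    (run A input C (lambdaSched n k)).oval = C.oval ∧
    (∀ j ∈ processesFrom n k, (run A input C (lambdaSched n k)).pstate j = A.init j (input j)) ∧
    (∀ j ∉ processesFrom n k, (run A input C (lambdaSched n k)).pstate j = C.pstate j) := by
  obtain ⟨hoval, hmem, hnmem⟩ :=
    run_crashes input C ((List.finRange n).filter fun j => decide (k ≤ j.val))
  exact ⟨hoval, fun j hj => hmem j (by simpa [processesFrom] using hj),
    fun j hj => hnmem j (by simpa [processesFrom] using hj)⟩

lemma agree_run_lambdaSched {C C' : Config A} (h : C.oval = C'.oval) (k : ℕ) :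
    (run A input C (lambdaSched n k)).Agree (processesFrom n k)
      (run A input C' (lambdaSched n k)) := by
  obtain ⟨hC, hinit, -⟩ := run_lambdaSched input C k
  obtain ⟨hC', hinit', -⟩ := run_lambdaSched input C' k
  exact ⟨hC.trans (h.trans hC'.symm), fun j hj => (hinit j hj).trans (hinit' j hj).symm⟩

lemma agree_self_run_lambdaSched (C : Config A) {k : ℕ} {j : Fin n} (hj : j.val < k) :
    C.Agree {j} (run A input C (lambdaSched n k)) := by
  obtain ⟨hoval, -, hbelow⟩ := run_lambdaSched input C k
  refine ⟨hoval.symm, ?_⟩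
  rintro _ rfl
  exact (hbelow _ (Nat.not_le.2 hj)).symm

lemma run_steps_oval {O : A.ObjIdx} {op : Fin n → (A.objType O).Op} (l : List (Fin n))
    (C : Config A) (hl : l.Nodup) (hp : ∀ i ∈ l, A.pending i (C.pstate i) = some ⟨O, op i⟩) :
    (run A input C (l.map Event.step)).oval O = applyOps (A.objType O) op (C.oval O) l ∧
    ∀ o, o ≠ O → (run A input C (l.map Event.step)).oval o = C.oval o := by
  classical
  induction l generalizing C with
  | nil => exact ⟨rfl, fun _ _ => rfl⟩
  | cons i l ih =>
    obtain ⟨hil, hl⟩ := List.nodup_cons.1 hl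
    obtain ⟨hpi, hpl⟩ := List.forall_mem_cons.1 hp
    obtain ⟨hO, hother⟩ := ih (applyEvent A input C (.step i)) hl fun j hj => by
      rw [pending_applyEvent_step input (ne_of_mem_of_not_mem hj hil).symm]
      exact hpl j hj
    rw [applyEvent_of_pending_some input hpi] at hO hother
    refine ⟨?_, fun o ho => ?_⟩
    · simp only [Function.update_self] at hO
      simpa only [List.map_cons, run, applyOps, applyEvent_of_pending_some input hpi] using hO
    · simpa only [List.map_cons, run, applyEvent_of_pending_some input hpi,
        Function.update_of_ne ho] using hother o ho

end Runs

end RecoverableConsensus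

namespace RecoverableConsensus

/-! ### Decisions -/

section Decisions

variable {n : ℕ} (A : Algorithm n) (input : Fin n → Bool)

/-- Some process decides `v` in the execution `σ` from the initial configuration. -/
def Decides (σ : List (Event n)) (v : Bool) : Prop :=
  ∃ i, HasDecided A input (initConfig A input) σ i v

variable {A input}

lemma Decides.mono {σ τ : List (Event n)} {v : Bool} (h : Decides A input σ v) (hστ : σ <+: τ) :
    Decides A input τ v := by
  obtain ⟨i, ρ, hρ, hout⟩ := h
  exact ⟨i, ρ, hρ.trans hστ, hout⟩

lemma Decides.unique (hA : Agreement A) {σ : List (Event n)} {v w : Bool}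
    (hv : Decides A input σ v) (hw : Decides A input σ w) : v = w := by
  obtain ⟨i, hi⟩ := hv
  obtain ⟨j, hj⟩ := hw
  exact hA input σ i j v w hi hj

lemma output_run_of_crash_notMem {C : Config A} {i : Fin n} {v : Bool} {σ : List (Event n)}
    (h : A.output i (C.pstate i) = some v) (hσ : Event.crash i ∉ σ) :
    A.output i ((run A input C σ).pstate i) = some v := by
  induction σ generalizing C with
  | nil => exact h
  | cons e σ ih =>
    simp only [List.mem_cons, not_or] at hσ
    obtain ⟨he, hσ⟩ := hσ
    refine ih ?_ hσ
    by_cases hei : eventBy {i} e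
    · cases e with
      | crash j => exact absurd (congrArg Event.crash (Eq.symm hei)) he
      | step j =>
        obtain rfl : j = i := hei
        rwa [applyEvent_of_pending_none input (A.output_noop _ _ (by simp [h]))]
    · rwa [applyEvent_pstate_of_not_eventBy input hei]

variable (A input) in
lemma exists_eq_append_last_reset (i : Fin n) (σ : List (Event n)) :
    ∃ σ₁ σ₂, σ = σ₁ ++ σ₂ ∧
      (run A input (initConfig A input) σ₁).pstate i = A.init i (input i) ∧
      Event.crash i ∉ σ₂ := by
  induction σ using List.reverseRecOn with
  | nil => exact ⟨[], [], rfl, rfl, List.not_mem_nil⟩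
  | append_singleton σ e ih =>
    by_cases he : e = Event.crash i
    · refine ⟨σ ++ [e], [], by simp, ?_, List.not_mem_nil⟩
      simp [he, run_append, run, applyEvent]
    · obtain ⟨σ₁, σ₂, rfl, hinit, hcrash⟩ := ih
      exact ⟨σ₁, σ₂ ++ [e], List.append_assoc _ _ _, hinit, by simp [hcrash, Ne.symm he]⟩

lemma initSeg_prefix (e : ℕ → Event n) {k m : ℕ} (h : k ≤ m) : initSeg e k <+: initSeg e m := by
  obtain ⟨d, rfl⟩ := Nat.exists_eq_add_of_le h
  simp only [initSeg, List.range_add, List.map_append]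
  exact List.prefix_append _ _

lemma initSeg_getD (σ : List (Event n)) (e : Event n) (m : ℕ) :
    initSeg (fun k => σ.getD k e) (σ.length + m) = σ ++ List.replicate m e := by
  refine List.ext_getElem (by simp [initSeg]) fun k _ _ => ?_
  rcases lt_or_ge k σ.length with hk | hk
  · simp [initSeg, hk]
  · simp [initSeg, List.getElem_append_right, hk]

lemma RecWaitFree.exists_solo_output (hW : RecWaitFree A) (input : Fin n → Bool)
    (σ : List (Event n)) (i : Fin n) :
    ∃ m v, A.output i ((run A input (initConfig A input)
      (σ ++ List.replicate m (Event.step i))).pstate i) = some v := by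
  obtain ⟨σ₁, σ₂, rfl, hinit, hcrash⟩ := exists_eq_append_last_reset A input i σ
  obtain ⟨k, v, hk⟩ := hW input (run A input (initConfig A input) σ₁)
    (fun k => σ₂.getD k (Event.step i)) i (Or.inl hinit)
    (fun m => ⟨max m σ₂.length, le_max_left _ _, by simp⟩)
    ⟨σ₂.length, fun k hk => by simp [List.getElem?_eq_none hk]⟩
  obtain ⟨ρ, hρ⟩ := initSeg_prefix (fun k => σ₂.getD k (Event.step i))
    (Nat.le_add_left k σ₂.length)
  rw [initSeg_getD] at hρ
  refine ⟨k, v, ?_⟩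
  rw [List.append_assoc, run_append, ← hρ, run_append]
  refine output_run_of_crash_notMem hk fun hmem => ?_
  have : Event.crash i ∈ σ₂ ++ List.replicate k (Event.step i) :=
    hρ ▸ List.mem_append_right _ hmem
  simp [hcrash, List.mem_replicate] at this

lemma RecWaitFree.exists_solo_decides (hW : RecWaitFree A) (input : Fin n → Bool)
    (σ : List (Event n)) (i : Fin n) :
    ∃ m v, Decides A input (σ ++ List.replicate m (Event.step i)) v := by
  obtain ⟨m, v, hm⟩ := hW.exists_solo_output input σ i
  exact ⟨m, v, i, _, List.prefix_rfl, hm⟩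

lemma RecWaitFree.exists_common_decision (hW : RecWaitFree A) {P : Set (Fin n)}
    {σ σ' : List (Event n)}
    (h : (run A input (initConfig A input) σ).Agree P (run A input (initConfig A input) σ'))
    {i : Fin n} (hi : i ∈ P) :
    ∃ m v, Decides A input (σ ++ List.replicate m (Event.step i)) v ∧
      Decides A input (σ' ++ List.replicate m (Event.step i)) v := by
  obtain ⟨m, v, hm⟩ := hW.exists_solo_output input σ i
  refine ⟨m, v, ⟨i, _, List.prefix_rfl, hm⟩, ⟨i, _, List.prefix_rfl, ?_⟩⟩
  rw [run_append] at hm ⊢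
  rwa [← (h.run input (eventBy_replicate hi m)).2 i hi]

end Decisions

/-! ### Infinite executions -/

section Limits

open Filter

lemma frequently_atTop_iff_not_bddAbove_count {p : ℕ → Prop} [DecidablePred p] :
    (∃ᶠ k in atTop, p k) ↔ ¬ BddAbove (Set.range (Nat.count p)) := by
  rw [Nat.frequently_atTop_iff_infinite]
  refine ⟨fun h => ?_, fun h hfin => h ⟨_, Set.forall_mem_range.2 (Nat.count_le_card hfin)⟩⟩
  rw [(Nat.surjective_count_of_infinite_setOfPred h).range_eq]
  exact not_bddAbove_univ

lemma prefix_of_le_of_forall_prefix_succ {α : Type*} {L : ℕ → List α}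
    (hL : ∀ t, L t <+: L (t + 1)) {s t : ℕ} (hst : s ≤ t) : L s <+: L t := by
  induction t, hst using Nat.le_induction with
  | base => exact List.prefix_rfl
  | succ t _ ih => exact ih.trans (hL t)

lemma exists_map_range_eq {α : Type*} {L : ℕ → List α} (hL : ∀ t, L t <+: L (t + 1))
    (hlen : ∀ k, ∃ t, k < (L t).length) :
    ∃ e : ℕ → α, ∀ t, L t = (List.range (L t).length).map e := by
  choose T hT using hlen
  refine ⟨fun k => (L (T k))[k]'(hT k), fun t => List.ext_getElem (by simp) fun k hk _ => ?_⟩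
  simp only [List.getElem_map, List.getElem_range]
  rcases le_total t (T k) with h | h
  · exact (prefix_of_le_of_forall_prefix_succ hL h).getElem hk
  · exact ((prefix_of_le_of_forall_prefix_succ hL h).getElem (hT k)).symm

lemma count_map_range {α : Type*} [DecidableEq α] (e : ℕ → α) (a : α) (k : ℕ) :
    ((List.range k).map e).count a = Nat.count (e · = a) k := by
  induction k with
  | zero => rfl
  | succ k ih =>
    simp [List.range_succ, List.count_append, ih, Nat.count_succ, List.count_singleton]

lemma frequently_eq_iff_not_bddAbove_count {α : Type*} [DecidableEq α] {L : ℕ → List α}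
    (hlen : ∀ k, ∃ t, k < (L t).length) {e : ℕ → α}
    (he : ∀ t, L t = (List.range (L t).length).map e) (a : α) :
    (∃ᶠ k in atTop, e k = a) ↔ ¬ BddAbove (Set.range fun t => (L t).count a) := by
  have hcount (t : ℕ) : (L t).count a = Nat.count (e · = a) (L t).length := by
    rw [← count_map_range, ← he t]
  rw [frequently_atTop_iff_not_bddAbove_count, not_iff_not]
  constructor <;> rintro ⟨M, hM⟩ <;> refine ⟨M, Set.forall_mem_range.2 fun k => ?_⟩
  · exact hcount k ▸ hM (Set.mem_range_self _)
  · obtain ⟨t, ht⟩ := hlen k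
    exact (Nat.count_monotone _ ht.le).trans (hcount t ▸ hM (Set.mem_range_self t))

variable {n : ℕ} {A : Algorithm n} {input : Fin n → Bool} {L : ℕ → List (Event n)}

lemma RecWaitFree.exists_decides_of_chain (hW : RecWaitFree A) (hL : ∀ t, L t <+: L (t + 1))
    {i : Fin n} (hstep : ¬ BddAbove (Set.range fun t => (L t).count (Event.step i)))
    (hcrash : BddAbove (Set.range fun t => (L t).count (Event.crash i))) :
    ∃ t v, Decides A input (L t) v := by
  have hlen (k : ℕ) : ∃ t, k < (L t).length := by
    obtain ⟨_, ⟨t, rfl⟩, ht⟩ := not_bddAbove_iff.1 hstep k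
    exact ⟨t, ht.trans_le List.count_le_length⟩
  obtain ⟨e, he⟩ := exists_map_range_eq hL hlen
  have hfreq (a : Event n) := frequently_eq_iff_not_bddAbove_count hlen he a
  obtain ⟨k, v, hk⟩ := hW input (initConfig A input) e i (Or.inl rfl)
    (frequently_atTop.1 ((hfreq _).2 hstep))
    (eventually_atTop.1 (not_frequently.1 (mt (hfreq _).1 (not_not.2 hcrash))))
  obtain ⟨t, ht⟩ := hlen k
  refine ⟨t, v, i, initSeg e k, ?_, hk⟩
  rw [he t]
  exact initSeg_prefix e ht.le

lemma stepsBelow_eq_sum (i : Fin n) (σ : List (Event n)) :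
    stepsBelow i σ = ∑ j with j < i, σ.count (Event.step j) := by
  induction σ with
  | nil => simp [stepsBelow]
  | cons e σ ih =>
    simp only [List.count_cons, Finset.sum_add_distrib, ← ih]
    cases e with
    | crash => simp [stepsBelow, isStepBelow]
    | step => simp [stepsBelow, isStepBelow, List.filter_cons]; split_ifs <;> rfl

lemma length_eq_sum_count (σ : List (Event n)) :
    σ.length = ∑ i, (σ.count (Event.step i) + σ.count (Event.crash i)) := by
  induction σ with
  | nil => simp
  | cons e σ ih =>
    simp only [Finset.sum_add_distrib] at ih
    cases e <;> simp [List.count_cons, Finset.sum_add_distrib, ih] <;> omega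

lemma bddAbove_range_sum {ι : Type*} {s : Finset ι} {f : ι → ℕ → ℕ}
    (h : ∀ i ∈ s, BddAbove (Set.range (f i))) : BddAbove (Set.range fun t => ∑ i ∈ s, f i t) := by
  choose! M hM using h
  exact ⟨∑ i ∈ s, M i, Set.forall_mem_range.2 fun t =>
    Finset.sum_le_sum fun i hi => hM i hi (Set.mem_range_self t)⟩

lemma bddAbove_count_crash {i : Fin n} {c : ℕ}
    (hstep : ∀ j < i, BddAbove (Set.range fun t => (L t).count (Event.step j)))
    (hcrash : ∀ t, crashCount i (L t) ≤ 2 * stepsBelow i (L t) + c) :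
    BddAbove (Set.range fun t => (L t).count (Event.crash i)) := by
  obtain ⟨M, hM⟩ : BddAbove (Set.range fun t => stepsBelow i (L t)) := by
    simp only [stepsBelow_eq_sum]
    exact bddAbove_range_sum fun j hj => hstep j (Finset.mem_filter.1 hj).2
  refine ⟨2 * M + c, Set.forall_mem_range.2 fun t => ?_⟩
  have := hcrash t
  have := hM (Set.mem_range_self t)
  rw [← crashCount_eq_count]
  omega

/-- The lowest process taking infinitely many steps crashes only finitely often. -/
lemma RecWaitFree.exists_decides_of_crashCount_le (hW : RecWaitFree A)
    (hL : ∀ t, L t <+: L (t + 1)) {j : Fin n}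
    (hstep : ¬ BddAbove (Set.range fun t => (L t).count (Event.step j)))
    (hcrash : ∀ i ≤ j, ∃ c, ∀ t, crashCount i (L t) ≤ 2 * stepsBelow i (L t) + c) :
    ∃ t v, Decides A input (L t) v := by
  obtain ⟨i, hi, hmin⟩ := WellFounded.has_min (wellFounded_lt (α := Fin n))
    {i | ¬ BddAbove (Set.range fun t => (L t).count (Event.step i))} ⟨j, hstep⟩
  obtain ⟨c, hc⟩ := hcrash i (not_lt.1 (hmin j hstep))
  exact hW.exists_decides_of_chain hL hi
    (bddAbove_count_crash (fun k hk => not_not.1 fun hk' => hmin k hk' hk) hc)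

lemma RecWaitFree.exists_decides_of_strict_chain (hW : RecWaitFree A)
    (hL : ∀ t, L t <+: L (t + 1)) (hlt : ∀ t, (L t).length < (L (t + 1)).length)
    (hcrash : ∀ i, ∃ c, ∀ t, crashCount i (L t) ≤ 2 * stepsBelow i (L t) + c) :
    ∃ t v, Decides A input (L t) v := by
  by_contra hund
  have hstep (i : Fin n) : BddAbove (Set.range fun t => (L t).count (Event.step i)) := by
    by_contra hi
    exact hund (hW.exists_decides_of_crashCount_le hL hi fun j _ => hcrash j)
  have hbdd : BddAbove (Set.range fun t => (L t).length) := by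
    simp only [length_eq_sum_count]
    refine bddAbove_range_sum fun i _ => BddAbove.range_add (hstep i) ?_
    obtain ⟨c, hc⟩ := hcrash i
    exact bddAbove_count_crash (fun j _ => hstep j) hc
  exact (strictMono_nat_of_lt_succ hlt).not_bddAbove_range_of_wellFoundedLT hbdd

end Limits

end RecoverableConsensus

namespace RecoverableConsensus

/-! ### Valency and critical executions -/

section Valency

variable {n : ℕ} (A : Algorithm n) (input : Fin n → Bool)

/-- After `σ`, both values can still be decided within the crash budget counted from the end of
`δ`. -/
abbrev BivalentFrom (δ σ : List (Event n)) : Prop :=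
  BivalentIn A input (initConfig A input) (budgeted 0 δ) Set.univ σ

/-- `σ` is critical for the crash budget counted from the end of `δ`. -/
abbrev CriticalFrom (δ σ : List (Event n)) : Prop :=
  Critical A input (initConfig A input) (budgeted 0 δ) σ

/-- For the crash budget counted from the end of `δ`, process `i` is on team `v` after `σ`. -/
abbrev OnTeamFrom (δ σ : List (Event n)) (i : Fin n) (v : Bool) : Prop :=
  OnTeam A input (initConfig A input) (budgeted 0 δ) σ i v

/-- The processes `p_K, …, p_{n-1}`, running without the others after `δ`, can only decide `v`, even
with one crash each beyond the budget. -/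
abbrev UpperUnivalent (K : ℕ) (δ : List (Event n)) (v : Bool) : Prop :=
  VUnivalentIn A input (initConfig A input) (budgeted (crashSlack K 1) δ) (processesFrom n K) δ v

variable {A input} {𝒜 : Set (List (Event n))} {P : Set (Fin n)} {s : Fin n → ℕ}
  {δ σ : List (Event n)}

lemma BivalentIn.not_decides (hA : Agreement A)
    (h : BivalentIn A input (initConfig A input) 𝒜 P σ) (v : Bool) : ¬ Decides A input σ v := by
  intro hv
  obtain ⟨β, -, -, hβ⟩ := h !v
  exact (Bool.eq_not_self v).1 ((hv.mono (List.prefix_append σ β)).unique hA hβ)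

lemma univalentIn_of_not_bivalentIn {C : Config A} (hσ : σ ∈ 𝒜)
    (h : ¬ BivalentIn A input C 𝒜 P σ) : UnivalentIn A input C 𝒜 P σ := by
  obtain ⟨v, hv⟩ := not_forall.1 h
  refine ⟨!v, hσ, fun β hβ hmem i w hw => Bool.eq_not.2 ?_⟩
  rintro rfl
  exact hv ⟨β, hβ, hmem, i, hw⟩

lemma VUnivalentIn.eq_of_decides {v w : Bool}
    (h : VUnivalentIn A input (initConfig A input) 𝒜 P σ v) {β : List (Event n)}
    (hβ : ∀ e ∈ β, eventBy P e) (hmem : σ ++ β ∈ 𝒜) (hw : Decides A input (σ ++ β) w) : w = v := by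
  obtain ⟨i, hi⟩ := hw
  exact h.2 β hβ hmem i w hi

lemma VUnivalentIn.exists_solo_decides (hW : RecWaitFree A) {v : Bool}
    (h : VUnivalentIn A input (initConfig A input) (budgeted s δ) P σ v) {i : Fin n} (hi : i ∈ P) :
    ∃ m, Decides A input (σ ++ List.replicate m (Event.step i)) v := by
  obtain ⟨m, w, hw⟩ := hW.exists_solo_decides input σ i
  obtain rfl := h.eq_of_decides (eventBy_replicate hi m)
    (append_mem_budgeted h.1 ((crashFree_replicate m i).crashBudget 0)) hw
  exact ⟨m, hw⟩

lemma VUnivalentIn.unique (hW : RecWaitFree A) {v w : Bool}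
    (hv : VUnivalentIn A input (initConfig A input) (budgeted s δ) P σ v)
    (hw : VUnivalentIn A input (initConfig A input) (budgeted s δ) P σ w) {i : Fin n}
    (hi : i ∈ P) : v = w := by
  obtain ⟨m, hm⟩ := hv.exists_solo_decides hW hi
  exact hw.eq_of_decides (eventBy_replicate hi m)
    (append_mem_budgeted hw.1 ((crashFree_replicate m i).crashBudget 0)) hm

lemma crashCount_le_of_mem_budgeted (hσ : σ ∈ budgeted 0 δ) (i : Fin n) :
    crashCount i σ ≤ 2 * stepsBelow i σ + crashCount i δ := by
  obtain ⟨β, hβ, rfl⟩ := hσ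
  have := hβ.crashCount_le i
  rw [crashCount_append, stepsBelow_append]
  simp only [Pi.zero_apply] at this
  omega

lemma BivalentIn.exists_criticalFrom (hA : Agreement A) (hW : RecWaitFree A)
    (h : BivalentFrom A input δ δ) : ∃ σ, CriticalFrom A input δ σ := by
  by_contra hcrit
  let S := {σ // σ ∈ budgeted 0 δ ∧ BivalentFrom A input δ σ}
  have hext (σ : S) : ∃ τ : S, σ.1 <+: τ.1 ∧ σ.1.length < τ.1.length := by
    by_contra hmax
    refine hcrit ⟨σ.1, σ.2.1, σ.2.2, fun β hβ hmem => univalentIn_of_not_bivalentIn hmem ?_⟩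
    refine fun hbiv => hmax ⟨⟨_, hmem, hbiv⟩, List.prefix_append _ _, ?_⟩
    simpa using List.length_pos_iff.2 hβ
  choose g hpre hlt using hext
  let L : ℕ → S := fun t => g^[t] ⟨δ, mem_budgeted_self 0 δ, h⟩
  have hL (t : ℕ) : L (t + 1) = g (L t) := Function.iterate_succ_apply' g t _
  obtain ⟨t, v, hv⟩ := hW.exists_decides_of_strict_chain (input := input) (L := fun t => (L t).1)
    (fun t => hL t ▸ hpre _) (fun t => hL t ▸ hlt _)
    fun i => ⟨_, fun t => crashCount_le_of_mem_budgeted (L t).2.1 i⟩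
  exact (L t).2.2.not_decides hA v hv

end Valency

/-! ### Teams at a critical execution -/

section Teams

variable {n : ℕ} {A : Algorithm n} {input : Fin n → Bool} {δ σ : List (Event n)}

lemma Critical.exists_onTeam (hσ : CriticalFrom A input δ σ) (i : Fin n) :
    ∃ v, OnTeamFrom A input δ σ i v :=
  hσ.2.2 [Event.step i] (List.cons_ne_nil _ _)
    (append_mem_budgeted hσ.1 ((crashFree_steps [i]).crashBudget 0))

lemma OnTeam.append_mem {i : Fin n} {v : Bool} (h : OnTeamFrom A input δ σ i v)
    {β : List (Event n)} (hβ : CrashFree β) : σ ++ Event.step i :: β ∈ budgeted 0 δ := by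
  rw [List.append_cons]
  exact append_mem_budgeted h.1 (hβ.crashBudget 0)

lemma OnTeam.eq_of_decides {i : Fin n} {v w : Bool} (h : OnTeamFrom A input δ σ i v)
    {β : List (Event n)} (hmem : σ ++ Event.step i :: β ∈ budgeted 0 δ)
    (hw : Decides A input (σ ++ Event.step i :: β) w) : w = v := by
  rw [List.append_cons] at hw hmem
  exact VUnivalentIn.eq_of_decides h (fun e _ => by cases e <;> trivial) hmem hw

lemma OnTeam.eq_of_solo_decides {i : Fin n} {v w : Bool} (h : OnTeamFrom A input δ σ i v) {m : ℕ}
    (hw : Decides A input (σ ++ List.replicate m (Event.step i)) w) : w = v := by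
  refine h.eq_of_decides (h.append_mem (crashFree_replicate m i)) (hw.mono ?_)
  rw [← List.replicate_succ, List.replicate_succ', ← List.append_assoc]
  exact List.prefix_append _ _

lemma OnTeam.eq_of_run_eq (hW : RecWaitFree A) {i j : Fin n} {v w : Bool}
    (hi : OnTeamFrom A input δ σ i v) (hj : OnTeamFrom A input δ σ j w) (l l' : List (Fin n))
    (h : run A input (run A input (initConfig A input) σ) ((i :: l).map Event.step) =
      run A input (run A input (initConfig A input) σ) ((j :: l').map Event.step)) : v = w := by
  have hagree : (run A input (initConfig A input) (σ ++ (i :: l).map Event.step)).Agree {i}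
      (run A input (initConfig A input) (σ ++ (j :: l').map Event.step)) := by
    rw [run_append, run_append, h]
    exact ⟨rfl, fun _ _ => rfl⟩
  obtain ⟨m, y, hy, hy'⟩ := hW.exists_common_decision hagree rfl
  have hfree (l : List (Fin n)) :
      CrashFree (l.map Event.step ++ List.replicate m (Event.step i)) :=
    crashFree_append (crashFree_steps l) (crashFree_replicate m i)
  rw [List.append_assoc] at hy hy'
  exact (hi.eq_of_decides (hi.append_mem (hfree l)) hy).symm.trans
    (hj.eq_of_decides (hj.append_mem (hfree l')) hy')

/-- If a decision for `x` begins with a crash, a process that does not notice this crash is on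
team `x`. -/
lemma Critical.exists_process_onTeam (hn : 1 < n) (hW : RecWaitFree A)
    (hσ : CriticalFrom A input δ σ) (x : Bool) : ∃ i, OnTeamFrom A input δ σ i x := by
  have : Nontrivial (Fin n) := Fin.nontrivial_iff_two_le.2 hn
  obtain ⟨β, -, hmem, hdec⟩ := hσ.2.1 x
  match β with
  | [] =>
    obtain ⟨i⟩ : Nonempty (Fin n) := inferInstance
    obtain ⟨v, hv⟩ := hσ.exists_onTeam i
    obtain rfl := hv.eq_of_solo_decides (m := 0) hdec
    exact ⟨i, hv⟩
  | .step i :: β =>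
    obtain ⟨v, hv⟩ := hσ.exists_onTeam i
    obtain rfl := hv.eq_of_decides hmem hdec
    exact ⟨i, hv⟩
  | .crash i :: β =>
    rw [List.append_cons] at hmem hdec
    have hcrash : σ ++ [Event.crash i] ∈ budgeted 0 δ :=
      mem_budgeted_of_prefix hσ.1 hmem (List.prefix_append _ _) (List.prefix_append _ _)
    obtain ⟨v, hv⟩ := hσ.2.2 [Event.crash i] (List.cons_ne_nil _ _) hcrash
    obtain rfl := hv.eq_of_decides (fun e _ => by cases e <;> trivial) hmem hdec
    obtain ⟨j, hji⟩ := exists_ne i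
    obtain ⟨w, hw⟩ := hσ.exists_onTeam j
    have hagree : (run A input (initConfig A input) σ).Agree {j}
        (run A input (initConfig A input) (σ ++ [Event.crash i])) := by
      rw [run_append]
      refine ⟨rfl, ?_⟩
      rintro _ rfl
      exact (applyEvent_pstate_of_not_eventBy input (e := .crash i) hji.symm).symm
    obtain ⟨m, y, hy, hy'⟩ := hW.exists_common_decision hagree rfl
    obtain rfl := hw.eq_of_solo_decides hy
    obtain rfl := hv.eq_of_decides (fun e _ => by cases e <;> trivial)
      (append_mem_budgeted hcrash ((crashFree_replicate m j).crashBudget 0)) hy'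
    exact ⟨j, hw⟩

lemma Critical.pending_ne_none (hn : 1 < n) (hW : RecWaitFree A)
    (hσ : CriticalFrom A input δ σ) (i : Fin n) :
    A.pending i ((run A input (initConfig A input) σ).pstate i) ≠ none := by
  intro hi
  obtain ⟨v, hv⟩ := hσ.exists_onTeam i
  obtain ⟨j, hj⟩ := hσ.exists_process_onTeam hn hW !v
  refine (Bool.eq_not_self v).1 (hv.eq_of_run_eq hW hj [j] [] ?_)
  simp only [List.map_cons, List.map_nil, run, applyEvent_of_pending_none input hi]

open scoped Classical in
lemma applyEvent_step_comm {C : Config A} {i j : Fin n} (hij : i ≠ j)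
    {a b : (o : A.ObjIdx) × (A.objType o).Op} (ha : A.pending i (C.pstate i) = some a)
    (hb : A.pending j (C.pstate j) = some b) (hab : a.1 ≠ b.1) :
    applyEvent A input (applyEvent A input C (.step i)) (.step j) =
      applyEvent A input (applyEvent A input C (.step j)) (.step i) := by
  have ha' := (pending_applyEvent_step input hij.symm).trans ha
  have hb' := (pending_applyEvent_step input hij).trans hb
  rw [applyEvent_of_pending_some input ha', applyEvent_of_pending_some input hb',
    applyEvent_of_pending_some input ha, applyEvent_of_pending_some input hb]
  simp only [Function.update_of_ne hab, Function.update_of_ne hab.symm,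
    Function.update_of_ne hij, Function.update_of_ne hij.symm]
  rw [Function.update_comm hij, Function.update_comm hab]

lemma OnTeam.object_eq (hW : RecWaitFree A) {i j : Fin n} {v w : Bool}
    (hi : OnTeamFrom A input δ σ i v) (hj : OnTeamFrom A input δ σ j w) (hvw : v ≠ w)
    {a b : (o : A.ObjIdx) × (A.objType o).Op}
    (ha : A.pending i ((run A input (initConfig A input) σ).pstate i) = some a)
    (hb : A.pending j ((run A input (initConfig A input) σ).pstate j) = some b) : a.1 = b.1 := by
  by_contra hab
  rcases eq_or_ne i j with rfl | hij
  · exact hab (by rw [Option.some.inj (ha.symm.trans hb)])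
  · exact hvw (hi.eq_of_run_eq hW hj [j] [i] (applyEvent_step_comm hij ha hb hab))

variable (A input δ σ) in
/-- The configuration reached by a critical execution `σ`: all processes are poised at one object,
and the team of the process stepping first determines the decision. -/
structure TeamStructure where
  obj : A.ObjIdx
  op : Fin n → (A.objType obj).Op
  team : Fin n → Bool
  mem : σ ∈ budgeted 0 δ
  pending_eq : ∀ i,
    A.pending i ((run A input (initConfig A input) σ).pstate i) = some ⟨obj, op i⟩
  onTeam : ∀ i, OnTeamFrom A input δ σ i (team i)
  team_surjective : Function.Surjective team

lemma Critical.nonempty_teamStructure (hn : 1 < n) (hW : RecWaitFree A)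
    (hσ : CriticalFrom A input δ σ) : Nonempty (TeamStructure A input δ σ) := by
  choose team hteam using hσ.exists_onTeam
  have hsurj (x : Bool) : ∃ i, team i = x := by
    obtain ⟨i, hi⟩ := hσ.exists_process_onTeam hn hW x
    exact ⟨i, (hteam i).eq_of_run_eq hW hi [] [] rfl⟩
  choose a ha using fun i => Option.ne_none_iff_exists'.1 (hσ.pending_ne_none hn hW i)
  have hobj {i j : Fin n} (hij : team i ≠ team j) : (a i).1 = (a j).1 :=
    (hteam i).object_eq hW (hteam j) hij (ha i) (ha j)
  obtain ⟨i₀, hi₀⟩ := hsurj false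
  obtain ⟨i₁, hi₁⟩ := hsurj true
  have hobj₀ (i : Fin n) : (a i).1 = (a i₀).1 := by
    cases hi : team i
    · exact (hobj (j := i₁) (by simp [hi, hi₁])).trans (hobj (by simp [hi₀, hi₁]))
    · exact hobj (by simp [hi, hi₀])
  have hop (i : Fin n) : ∃ q : (A.objType (a i₀).1).Op, a i = ⟨(a i₀).1, q⟩ := by
    rw [← hobj₀ i]
    exact ⟨(a i).2, rfl⟩
  choose op hop using hop
  exact ⟨⟨(a i₀).1, op, team, hσ.1, fun i => (ha i).trans (congrArg some (hop i)), hteam, hsurj⟩⟩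

end Teams

end RecoverableConsensus

namespace RecoverableConsensus

/-! ### Stages -/

section Stages

variable {n : ℕ} {A : Algorithm n} {input : Fin n → Bool} {δ σ α : List (Event n)} {K : ℕ}

/-- After `σ`, the processes in `l` take a step each, and then `p_k, …, p_{n-1}` crash. -/
def stepsThenCrashes (σ : List (Event n)) (l : List (Fin n)) (k : ℕ) : List (Event n) :=
  σ ++ (l.map Event.step ++ lambdaSched n k)

lemma run_stepsThenCrashes (C : Config A) (l : List (Fin n)) (k : ℕ) :
    run A input C (stepsThenCrashes σ l k) =
      run A input (run A input C (σ ++ l.map Event.step)) (lambdaSched n k) := by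
  rw [stepsThenCrashes, ← List.append_assoc, run_append]

variable (A input) in
/-- An execution after which both values can still be decided, although the processes
`p_K, …, p_{n-1}` can only decide one of them by themselves. -/
structure IsStage (K : ℕ) (δ : List (Event n)) : Prop where
  lt : K < n
  bivalent : BivalentFrom A input δ δ
  univalent : ∃ v, UpperUnivalent A input K δ v

lemma bivalentFrom_of_solo_decides
    (h : ∀ v, ∃ i m, Decides A input (δ ++ List.replicate m (Event.step i)) v) :
    BivalentFrom A input δ δ := by
  intro v
  obtain ⟨i, m, hm⟩ := h v
  exact ⟨_, eventBy_replicate (Set.mem_univ i) m,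
    append_mem_budgeted (mem_budgeted_self 0 δ) ((crashFree_replicate m i).crashBudget 0), hm⟩

lemma UpperUnivalent.isStage (hW : RecWaitFree A) (hK : K < n) {v w : Bool}
    (hv : UpperUnivalent A input K δ v) (hvw : w ≠ v) {i : Fin n} {m : ℕ}
    (hw : Decides A input (δ ++ List.replicate m (Event.step i)) w) : IsStage A input K δ := by
  refine ⟨hK, bivalentFrom_of_solo_decides fun x => ?_, v, hv⟩
  rcases eq_or_ne x v with rfl | hx
  · exact ⟨⟨K, hK⟩, hv.exists_solo_decides hW (i := ⟨K, hK⟩) (le_refl K)⟩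
  · obtain rfl : x = w := (Bool.eq_not.2 hx).trans (Bool.eq_not.2 hvw).symm
    exact ⟨i, m, hw⟩

lemma UpperUnivalent.eq_of_stepsThenCrashes (hW : RecWaitFree A) {v w : Bool}
    (hv : UpperUnivalent A input K δ v) (hmem : δ ++ α ∈ budgeted 0 δ)
    (hα : ∀ e ∈ α, eventBy (processesFrom n K) e) {l : List (Fin n)}
    (hl : ∀ j ∈ l, j ∈ processesFrom n K) {k : ℕ} (hKk : K ≤ k) (hk : k < n)
    (hw : UpperUnivalent A input k (stepsThenCrashes (δ ++ α) l k) w) : w = v := by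
  obtain ⟨m, hm⟩ := hw.exists_solo_decides hW (i := ⟨k, hk⟩) (le_refl k)
  have heq : stepsThenCrashes (δ ++ α) l k ++ List.replicate m (Event.step ⟨k, hk⟩) =
      δ ++ (α ++ l.map Event.step ++ lambdaSched n k ++
        List.replicate m (Event.step ⟨k, hk⟩)) := by
    simp only [stepsThenCrashes, List.append_assoc]
  rw [heq] at hm
  refine hv.eq_of_decides ?_ (append_mem_budgeted_iff.2 ?_) hm
  · simp only [List.forall_mem_append]
    exact ⟨⟨⟨hα, List.forall_mem_map.2 hl⟩, eventBy_lambdaSched hKk⟩,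
      eventBy_replicate (i := ⟨k, hk⟩) hKk m⟩
  · exact (((append_mem_budgeted_iff.1 hmem).append_zero
      ((crashFree_steps l).crashBudget 0)).append_lambdaSched hKk).append_zero
      ((crashFree_replicate m _).crashBudget 0)

lemma RecWaitFree.exists_decides_stepsThenCrashes (hW : RecWaitFree A) (input : Fin n → Bool)
    (σ : List (Event n)) (l : List (Fin n)) {k : ℕ} {i : Fin n} (hik : i.val < k) :
    ∃ m v, Decides A input (σ ++ l.map Event.step ++ List.replicate m (Event.step i)) v ∧
      Decides A input (stepsThenCrashes σ l k ++ List.replicate m (Event.step i)) v := by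
  refine hW.exists_common_decision (P := {i}) ?_ rfl
  rw [run_stepsThenCrashes]
  exact agree_self_run_lambdaSched input _ hik

end Stages

section Combinatorics

variable {n : ℕ}

lemma applyOps_append (T : DetType) (o : Fin n → T.Op) (u : T.Value) (l l' : List (Fin n)) :
    applyOps T o u (l ++ l') = applyOps T o (applyOps T o u l) l' := by
  induction l generalizing u with
  | nil => rfl
  | cons _ _ ih => exact ih _

lemma inter_eq_empty_iff_forall_bool {α : Type*} {U : Bool → Set α} :
    U false ∩ U true = ∅ ↔ ∀ x, ∀ z ∈ U x, z ∉ U !x := by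
  rw [← Set.disjoint_iff_inter_eq_empty, Bool.forall_bool]
  exact ⟨fun h => ⟨fun _ h₀ h₁ => h.ne_of_mem h₀ h₁ rfl, fun _ h₁ h₀ => h.ne_of_mem h₀ h₁ rfl⟩,
    fun h => Set.disjoint_left.2 h.1⟩

lemma eq_singleton_of_forall_not_lt {i : Fin n} {τ : List (Fin n)} (hnd : (i :: τ).Nodup)
    (h : ∀ j ∈ i :: τ, ¬ j.val < n - 1) : τ = [] ∧ i.val = n - 1 := by
  have hlast (j : Fin n) (hj : j ∈ i :: τ) : j.val = n - 1 := by
    have := h j hj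
    omega
  refine ⟨List.eq_nil_iff_forall_not_mem.2 fun j hj => (List.nodup_cons.1 hnd).1 ?_,
    hlast i List.mem_cons_self⟩
  rwa [Fin.ext ((hlast i List.mem_cons_self).trans (hlast j (List.mem_cons_of_mem i hj)).symm)]

end Combinatorics

/-! ### From a critical execution to the next stage -/

namespace TeamStructure

variable {n : ℕ} {A : Algorithm n} {input : Fin n → Bool} {δ σ : List (Event n)}
  (S : TeamStructure A input δ σ)

/-- The value of the object at which all processes are poised. -/
noncomputable def value : (A.objType S.obj).Value :=
  (run A input (initConfig A input) σ).oval S.obj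

/-- The value of the object after one step of each of the processes in `l`. -/
noncomputable def valueAfter (l : List (Fin n)) : (A.objType S.obj).Value :=
  applyOps (A.objType S.obj) S.op S.value l

/-- The values reachable by one step each of some processes, the first one on team `x`. -/
def teamValues (x : Bool) : Set (A.objType S.obj).Value :=
  UVals (A.objType S.obj) S.op S.value S.team x

lemma run_steps_oval_eq {l l' : List (Fin n)} (hl : l.Nodup) (hl' : l'.Nodup)
    (h : S.valueAfter l = S.valueAfter l') :
    (run A input (initConfig A input) (σ ++ l.map Event.step)).oval =
      (run A input (initConfig A input) (σ ++ l'.map Event.step)).oval := by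
  have hrun {l : List (Fin n)} (hl : l.Nodup) :=
    run_steps_oval input l (run A input (initConfig A input) σ) hl fun i _ => S.pending_eq i
  rw [run_append, run_append]
  funext o
  rcases eq_or_ne o S.obj with rfl | ho
  · exact (hrun hl).1.trans (h.trans (hrun hl').1.symm)
  · exact ((hrun hl).2 o ho).trans ((hrun hl').2 o ho).symm

/-- After the steps of `l'` and the crashes `λ_k`, the processes from `p_k` on cannot tell `l'` from
the schedule `i :: τ`, and the latter contains a step paying for these crashes. -/
lemma upperUnivalent_of_valueAfter_eq (hA : Agreement A) (hW : RecWaitFree A) {i j : Fin n}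
    {τ l' : List (Fin n)} {k : ℕ} (hnd : (i :: τ).Nodup) (hnd' : l'.Nodup)
    (h : S.valueAfter l' = S.valueAfter (i :: τ)) (hj : j ∈ i :: τ) (hjk : j.val < k)
    (hk : k < n) : UpperUnivalent A input k (stepsThenCrashes σ l' k) (S.team i) := by
  refine ⟨mem_budgeted_self _ _, fun β hβ hmem p w hw => ?_⟩
  have hagree : (run A input (initConfig A input) (stepsThenCrashes σ l' k ++ β)).Agree
      (processesFrom n k)
      (run A input (initConfig A input) (stepsThenCrashes σ (i :: τ) k ++ β)) := by
    rw [run_append, run_append, run_stepsThenCrashes, run_stepsThenCrashes]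
    exact (agree_run_lambdaSched input (S.run_steps_oval_eq hnd' hnd h) k).run input hβ
  obtain ⟨m, v, hv, hv'⟩ := hW.exists_common_decision hagree (i := ⟨k, hk⟩) (le_refl k)
  have hbudget := CrashBudget.steps_lambdaSched_append hj hjk
    ((append_mem_budgeted_iff.1 hmem).append_zero
      ((crashFree_replicate m ⟨k, hk⟩).crashBudget 0))
  have hteam : v = S.team i := by
    refine (S.onTeam i).eq_of_decides
      (β := τ.map Event.step ++ (lambdaSched n k ++ (β ++ List.replicate m (Event.step ⟨k, hk⟩))))
      (append_mem_budgeted S.mem hbudget) ?_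
    simpa only [stepsThenCrashes, List.append_assoc, List.map_cons, List.cons_append] using hv'
  rw [← hteam]
  exact Decides.unique hA (Decides.mono ⟨p, hw⟩ (List.prefix_append _ _)) hv

lemma team_eq_of_upperUnivalent (hW : RecWaitFree A) {α : List (Event n)} {K : ℕ} {v : Bool}
    (S : TeamStructure A input δ (δ ++ α)) (hv : UpperUnivalent A input K δ v)
    (hα : ∀ e ∈ α, eventBy (processesFrom n K) e) {j : Fin n} (hj : K ≤ j.val) :
    S.team j = v := by
  obtain ⟨m, w, hw⟩ := hW.exists_solo_decides input (δ ++ α) j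
  rw [← (S.onTeam j).eq_of_solo_decides hw]
  rw [List.append_assoc] at hw
  refine hv.eq_of_decides ?_ (append_mem_budgeted_iff.2 ?_) hw
  · exact List.forall_mem_append.2 ⟨hα, eventBy_replicate hj m⟩
  · exact ((append_mem_budgeted_iff.1 S.mem).append_zero
      ((crashFree_replicate m j).crashBudget 0)).mono fun _ => Nat.zero_le _

lemma exists_hidden_team (hrec : ¬ NRecording n (A.objType S.obj))
    (hdisj : ∀ x, ∀ z ∈ S.teamValues x, z ∉ S.teamValues !x) :
    ∃ x, S.value ∈ S.teamValues x ∧ ∃ k k₂ : Fin n, k < k₂ ∧ S.team k = !x ∧ S.team k₂ = !x := by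
  obtain ⟨x, hx, huniq⟩ : ∃ x, S.value ∈ S.teamValues x ∧ ¬ ∃! i, S.team i = !x := by
    by_contra! hcon
    exact hrec ⟨S.value, S.team, S.op, S.team_surjective,
      inter_eq_empty_iff_forall_bool.2 hdisj, hcon⟩
  obtain ⟨k, hk⟩ := S.team_surjective !x
  obtain ⟨k₂, hk₂, hne⟩ : ∃ k₂, S.team k₂ = (!x) ∧ k₂ ≠ k := by
    by_contra! hcon
    exact huniq ⟨k, hk, hcon⟩
  rcases lt_or_gt_of_ne hne with hlt | hlt
  · exact ⟨x, hx, k₂, k, hlt, hk₂, hk⟩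
  · exact ⟨x, hx, k, k₂, hlt, hk, hk₂⟩

lemma mem_of_valueAfter_eq_value {x : Bool} (hdisj : ∀ z ∈ S.teamValues x, z ∉ S.teamValues !x)
    {i k : Fin n} {τ : List (Fin n)} (hi : S.team i = x) (hnd : (i :: τ).Nodup)
    (h : S.valueAfter (i :: τ) = S.value) (hk : S.team k = !x) : k ∈ i :: τ := by
  by_contra hmem
  refine hdisj (S.valueAfter [k]) ⟨i, τ ++ [k], hi, ?_, ?_⟩ ⟨k, [], hk, List.nodup_singleton k, rfl⟩
  · rw [← List.cons_append]
    exact hnd.append (List.nodup_singleton k) (List.disjoint_singleton.2 hmem)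
  · rw [← List.cons_append, applyOps_append]
    exact congrArg (fun u => applyOps _ S.op u [k]) h.symm

lemma exists_isStage_of_hiding (hA : Agreement A) (hW : RecWaitFree A) {α : List (Event n)}
    (S : TeamStructure A input δ (δ ++ α)) {x : Bool} {i k k₂ : Fin n} {τ : List (Fin n)}
    (hi : S.team i = x) (hnd : (i :: τ).Nodup) (h : S.value = S.valueAfter (i :: τ))
    (hk : S.team k = !x) (hk₂ : S.team k₂ = !x) (hkk₂ : k < k₂) (hmem : k ∈ i :: τ) :
    IsStage A input (k + 1) (stepsThenCrashes (δ ++ α) [] (k + 1)) ∧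
      ∀ K < n, ∀ v, UpperUnivalent A input K δ v →
        (∀ e ∈ α, eventBy (processesFrom n K) e) → k + 1 < K := by
  have hkn : k.val + 1 < n := by have := k₂.isLt; omega
  have huniv {j : Fin n} {K : ℕ} (hj : j ∈ i :: τ) (hjK : j.val < K) (hK : K < n) :=
    S.upperUnivalent_of_valueAfter_eq hA hW hnd List.nodup_nil h hj hjK hK
  constructor
  · obtain ⟨m, w, hw, hw'⟩ := hW.exists_decides_stepsThenCrashes input (δ ++ α) []
      (Nat.lt_succ_self k.val)
    rw [List.map_nil, List.append_nil] at hw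
    refine (huniv hmem k.val.lt_succ_self hkn).isStage hW hkn ?_ hw'
    rw [(S.onTeam k).eq_of_solo_decides hw, hi, hk]
    exact (Bool.not_eq_self x).1
  · intro K hKn v hv hα
    have hteam {j : Fin n} (hj : K ≤ j.val) : S.team j = v :=
      team_eq_of_upperUnivalent hW S hv hα hj
    have hxv : x = v := by
      rcases le_or_gt K i.val with hKi | hiK
      · exact hi.symm.trans (hteam hKi)
      · exact hi.symm.trans (hv.eq_of_stepsThenCrashes hW S.mem hα (l := []) (by simp) le_rfl hKn
          (huniv List.mem_cons_self hiK hKn))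
    have hk₂K : k₂.val < K := by
      by_contra! hK
      rw [hteam hK, hxv] at hk₂
      exact (Bool.eq_not_self v).1 hk₂
    omega

lemma exists_isStage_of_collision (hn : 1 < n) (hA : Agreement A) (hW : RecWaitFree A)
    {α : List (Event n)} (S : TeamStructure A input δ (δ ++ α)) {p i : Fin n} {τ : List (Fin n)}
    (hp : p.val = n - 1) (hne : S.team i ≠ S.team p) (hnd : (i :: τ).Nodup)
    (h : S.valueAfter [p] = S.valueAfter (i :: τ)) :
    IsStage A input (n - 1) (stepsThenCrashes (δ ++ α) [p] (n - 1)) ∧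
      ∀ K < n, ∀ v, UpperUnivalent A input K δ v →
        ¬ ∀ e ∈ α, eventBy (processesFrom n K) e := by
  have hi : i.val < n - 1 := by
    have : i ≠ p := fun hip => hne (congrArg S.team hip)
    omega
  have huniv := S.upperUnivalent_of_valueAfter_eq hA hW hnd (List.nodup_singleton p) h
    List.mem_cons_self hi (by omega)
  constructor
  · obtain ⟨m, w, hw, hw'⟩ := hW.exists_decides_stepsThenCrashes input (δ ++ α) [p]
      (i := ⟨0, by omega⟩) (k := n - 1) (by simp; omega)
    refine huniv.isStage hW (by omega) ?_ hw'
    rw [List.map_singleton, List.append_assoc] at hw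
    rw [(S.onTeam p).eq_of_decides ((S.onTeam p).append_mem (crashFree_replicate m _)) hw]
    exact hne.symm
  · intro K hKn v hv hα
    have hKp : K ≤ p.val := by omega
    refine hne ((hv.eq_of_stepsThenCrashes hW S.mem hα (l := [p]) ?_ (by omega) (by omega)
      huniv).trans (team_eq_of_upperUnivalent hW S hv hα hKp).symm)
    exact List.forall_mem_singleton.2 hKp

/-- If both of two colliding schedules contain a step of a process other than the last one, then
the last process can by itself decide neither value. -/
lemma exists_last_step_of_collision (hA : Agreement A) (hW : RecWaitFree A) (hn : 1 < n)
    {x : Bool} {z : (A.objType S.obj).Value} (hz : z ∈ S.teamValues x)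
    (hz' : z ∈ S.teamValues !x) :
    ∃ (p i : Fin n) (τ : List (Fin n)), p.val = n - 1 ∧ S.team i ≠ S.team p ∧ (i :: τ).Nodup ∧
      S.valueAfter [p] = S.valueAfter (i :: τ) := by
  obtain ⟨i₀, τ₀, hteam₀, hnd₀, hz₀⟩ := hz
  obtain ⟨i₁, τ₁, hteam₁, hnd₁, hz₁⟩ := hz'
  have hne : S.team i₀ ≠ S.team i₁ := by
    rw [hteam₀, hteam₁]
    exact (Bool.eq_not_self x).1
  have heq : S.valueAfter (i₀ :: τ₀) = S.valueAfter (i₁ :: τ₁) := hz₀.symm.trans hz₁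
  by_cases h₀ : ∃ j ∈ i₀ :: τ₀, j.val < n - 1
  · by_cases h₁ : ∃ j ∈ i₁ :: τ₁, j.val < n - 1
    · obtain ⟨j₀, hj₀, hlt₀⟩ := h₀
      obtain ⟨j₁, hj₁, hlt₁⟩ := h₁
      have huniv₀ := S.upperUnivalent_of_valueAfter_eq hA hW hnd₀ hnd₀ rfl hj₀ hlt₀ (by omega)
      have huniv₁ := S.upperUnivalent_of_valueAfter_eq hA hW hnd₁ hnd₀ heq hj₁ hlt₁ (by omega)
      exact absurd (huniv₀.unique hW huniv₁ (i := ⟨n - 1, by omega⟩) (le_refl (n - 1))) hne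
    · push Not at h₁
      obtain ⟨rfl, hlast⟩ := eq_singleton_of_forall_not_lt hnd₁ fun j hj => (h₁ j hj).not_gt
      exact ⟨i₁, i₀, τ₀, hlast, hne, hnd₀, heq.symm⟩
  · push Not at h₀
    obtain ⟨rfl, hlast⟩ := eq_singleton_of_forall_not_lt hnd₀ fun j hj => (h₀ j hj).not_gt
    exact ⟨i₀, i₁, τ₁, hlast, hne.symm, hnd₁, heq⟩

lemma exists_isStage (hn : 1 < n) (hA : Agreement A) (hW : RecWaitFree A) {α : List (Event n)}
    (S : TeamStructure A input δ (δ ++ α)) (hrec : ¬ NRecording n (A.objType S.obj)) :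
    ∃ l k, IsStage A input k (stepsThenCrashes (δ ++ α) l k) ∧
      ∀ K < n, ∀ v, UpperUnivalent A input K δ v →
        (∀ e ∈ α, eventBy (processesFrom n K) e) → k < K := by
  by_cases hdisj : ∀ x, ∀ z ∈ S.teamValues x, z ∉ S.teamValues !x
  · obtain ⟨x, ⟨i, τ, hi, hnd, h⟩, k, k₂, hkk₂, hk, hk₂⟩ := S.exists_hidden_team hrec hdisj
    exact ⟨[], k + 1, exists_isStage_of_hiding hA hW S hi hnd h hk hk₂ hkk₂
      (S.mem_of_valueAfter_eq_value (hdisj x) hi hnd h.symm hk)⟩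
  · push Not at hdisj
    obtain ⟨x, z, hz, hz'⟩ := hdisj
    obtain ⟨p, i, τ, hp, hne, hnd, h⟩ := S.exists_last_step_of_collision hA hW hn hz hz'
    obtain ⟨hstage, hdrop⟩ := exists_isStage_of_collision hn hA hW S hp hne hnd h
    exact ⟨[p], n - 1, hstage, fun K hK v hv hα => absurd hα (hdrop K hK v hv)⟩

end TeamStructure

end RecoverableConsensus

namespace RecoverableConsensus

/-! ### Infinite chains of stages -/

section Chains

open Filter

lemma exists_eventually_ge_frequently_le {K : ℕ → ℕ} {N : ℕ} (h : ∃ᶠ t in atTop, K t ≤ N) :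
    ∃ k, (∀ᶠ t in atTop, k ≤ K t) ∧ ∃ᶠ t in atTop, K t ≤ k := by
  classical
  have hex : ∃ k, ∃ᶠ t in atTop, K t ≤ k := ⟨N, h⟩
  refine ⟨Nat.find hex, ?_, Nat.find_spec hex⟩
  rcases Nat.eq_zero_or_pos (Nat.find hex) with h0 | hpos
  · exact .of_forall fun t => h0.symm ▸ Nat.zero_le _
  · filter_upwards [not_frequently.1 (Nat.find_min hex (Nat.sub_one_lt_of_lt hpos))] with t ht
    omega

variable {n : ℕ}

/-- A crash of a process below `p_K` has been paid for by a step of a process with even smaller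
index. -/
lemma CrashBudget.exists_step_of_not_forall_eventBy {α : List (Event n)} {K : ℕ}
    (hα : CrashBudget 0 α) (h : ¬ ∀ e ∈ α, eventBy (processesFrom n K) e) :
    ∃ j : Fin n, j.val < K ∧ Event.step j ∈ α := by
  push Not at h
  obtain ⟨⟨j⟩ | ⟨j⟩, he, hj⟩ := h
  · exact ⟨j, not_le.1 hj, he⟩
  · have hpos := crashCount_pos_iff.2 he
    have hle := hα.crashCount_le j
    rw [Pi.zero_apply] at hle
    obtain ⟨i, hij, hi⟩ := stepsBelow_pos_iff.1 (show 0 < stepsBelow j α by omega)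
    exact ⟨i, (Fin.lt_def.1 hij).trans (not_le.1 hj), hi⟩

/-- An infinite sequence of executions, each extending the one before by `α t`, by steps of the
processes in `l t` and by the crashes `λ_{K (t + 1)}`. -/
structure StageChain (n : ℕ) where
  δ : ℕ → List (Event n)
  α : ℕ → List (Event n)
  l : ℕ → List (Fin n)
  K : ℕ → ℕ
  succ_eq : ∀ t, δ (t + 1) = stepsThenCrashes (δ t ++ α t) (l t) (K (t + 1))
  crashBudget : ∀ t, CrashBudget 0 (α t)
  lt : ∀ t, K t < n
  lt_of_eventBy : ∀ t, (∀ e ∈ α t, eventBy (processesFrom n (K t)) e) → K (t + 1) < K t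

namespace StageChain

variable (S : StageChain n)

lemma append_prefix_succ (t : ℕ) : S.δ t ++ S.α t <+: S.δ (t + 1) :=
  S.succ_eq t ▸ List.prefix_append _ _

lemma prefix_succ (t : ℕ) : S.δ t <+: S.δ (t + 1) :=
  (List.prefix_append _ _).trans (S.append_prefix_succ t)

lemma not_bddAbove_count_step {j : Fin n} (hj : ∃ᶠ t in atTop, Event.step j ∈ S.α t) :
    ¬ BddAbove (Set.range fun t => (S.δ t).count (Event.step j)) := by
  suffices h : ∀ M, ∃ t, M ≤ (S.δ t).count (Event.step j) by
    rintro ⟨M, hM⟩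
    obtain ⟨t, ht⟩ := h (M + 1)
    exact absurd (ht.trans (hM (Set.mem_range_self t))) (Nat.not_succ_le_self M)
  intro M
  induction M with
  | zero => exact ⟨0, Nat.zero_le _⟩
  | succ M ih =>
    obtain ⟨t, ht⟩ := ih
    obtain ⟨t', htt', hmem⟩ := frequently_atTop.1 hj t
    have hmono := (prefix_of_le_of_forall_prefix_succ S.prefix_succ htt').count_le (Event.step j)
    have hsucc := (S.append_prefix_succ t').count_le (Event.step j)
    have hpos := List.count_pos_iff.2 hmem
    rw [List.count_append] at hsucc
    exact ⟨t' + 1, by omega⟩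

/-- As long as `k ≤ K t`, a process below `p_k` crashes only in the executions `α t`, within the
crash budget. -/
lemma exists_crashCount_le {k : ℕ} (hk : ∀ᶠ t in atTop, k ≤ S.K t) {i : Fin n} (hi : i.val < k) :
    ∃ c, ∀ t, crashCount i (S.δ t) ≤ 2 * stepsBelow i (S.δ t) + c := by
  obtain ⟨T, hT⟩ := eventually_atTop.1 hk
  refine ⟨crashCount i (S.δ T), fun t => ?_⟩
  rcases le_total t T with ht | ht
  · have := crashCount_le_of_prefix (prefix_of_le_of_forall_prefix_succ S.prefix_succ ht) i
    omega
  · induction t, ht using Nat.le_induction with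
    | base => omega
    | succ t ht ih =>
      have hα := (S.crashBudget t).crashCount_le i
      have hl := (crashFree_steps (S.l t)).crashCount i
      have hlambda := crashCount_lambdaSched_le (S.K (t + 1)) i
      rw [crashSlack, if_neg (by have := hT (t + 1) (by omega); omega)] at hlambda
      rw [S.succ_eq t, stepsThenCrashes]
      simp only [crashCount_append, stepsBelow_append, Pi.zero_apply] at hα ⊢
      omega

/-- Let `k` be the limit inferior of `K`. Infinitely often `K t ≤ k ≤ K (t + 1)`, and then a process
below `p_k` takes a step in `α t`. -/
lemma exists_frequently_step : ∃ k, (∀ᶠ t in atTop, k ≤ S.K t) ∧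
    ∃ j : Fin n, j.val < k ∧ ∃ᶠ t in atTop, Event.step j ∈ S.α t := by
  obtain ⟨k, hev, hfreq⟩ := exists_eventually_ge_frequently_le (K := S.K)
    (Frequently.of_forall fun t => (S.lt t).le)
  have hstep : ∃ᶠ t in atTop, ∃ j : Fin n, j.val < k ∧ Event.step j ∈ S.α t := by
    refine (hfreq.and_eventually ((tendsto_add_atTop_nat 1).eventually hev)).mono ?_
    rintro t ⟨hle, hge⟩
    obtain ⟨j, hj, hmem⟩ := (S.crashBudget t).exists_step_of_not_forall_eventBy fun h =>
      (hge.trans_lt (S.lt_of_eventBy t h)).not_ge hle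
    exact ⟨j, hj.trans_le hle, hmem⟩
  obtain ⟨j, hj⟩ : ∃ j : Fin n, ∃ᶠ t in atTop, j.val < k ∧ Event.step j ∈ S.α t := by
    by_contra! hcon
    refine hstep ((eventually_all.2 hcon).mono ?_)
    rintro t ht ⟨j, hj⟩
    exact ht j hj.1 hj.2
  exact ⟨k, hev, j, hj.exists.choose_spec.1, hj.mono fun _ h => h.2⟩

lemma exists_decides {A : Algorithm n} (hW : RecWaitFree A) (input : Fin n → Bool) :
    ∃ t v, Decides A input (S.δ t) v := by
  obtain ⟨k, hk, j, hj, hfreq⟩ := S.exists_frequently_step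
  exact hW.exists_decides_of_crashCount_le S.prefix_succ (S.not_bddAbove_count_step hfreq)
    fun i hij => S.exists_crashCount_le hk ((Fin.le_def.1 hij).trans_lt hj)

end StageChain

end Chains

/-! ### Some object is recording -/

section Recording

variable {n : ℕ} {A : Algorithm n} {input : Fin n → Bool}

lemma run_replicate_step_congr (input input' : Fin n → Bool) (C : Config A) (i : Fin n) (m : ℕ) :
    run A input C (List.replicate m (Event.step i)) =
      run A input' C (List.replicate m (Event.step i)) := by
  induction m generalizing C with
  | zero => rfl
  | succ _ ih => exact ih _

/-- A process running alone cannot exclude that all inputs are equal to its own. -/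
lemma exists_solo_decides_input (hV : Validity A) (hW : RecWaitFree A) (input : Fin n → Bool)
    (i : Fin n) : ∃ m, Decides A input (List.replicate m (Event.step i)) (input i) := by
  obtain ⟨m, v, hm⟩ := hW.exists_solo_output input [] i
  rw [List.nil_append] at hm
  have hagree : (initConfig A input).Agree {i} (initConfig A fun _ => input i) :=
    ⟨rfl, by rintro _ rfl; rfl⟩
  have hstate := (hagree.run input (eventBy_replicate (Set.mem_singleton i) m)).2 i rfl
  rw [run_replicate_step_congr input (fun _ => input i) (initConfig A fun _ => input i)] at hstate
  obtain ⟨_, rfl⟩ := hV (fun _ => input i) (List.replicate m (Event.step i)) i v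
    ⟨_, List.prefix_rfl, hstate ▸ hm⟩
  exact ⟨m, i, _, List.prefix_rfl, hm⟩

lemma bivalentFrom_nil (hn : 1 < n) (hV : Validity A) (hW : RecWaitFree A) :
    BivalentFrom A (fun i => decide (i.val ≠ 0)) [] [] := by
  refine bivalentFrom_of_solo_decides fun v => ?_
  obtain ⟨i, rfl⟩ : ∃ i : Fin n, decide (i.val ≠ 0) = v := by
    cases v
    · exact ⟨⟨0, by omega⟩, by simp⟩
    · exact ⟨⟨1, hn⟩, by simp⟩
  exact ⟨i, exists_solo_decides_input hV hW _ i⟩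

lemma BivalentIn.exists_isStage (hn : 1 < n) (hA : Agreement A) (hW : RecWaitFree A)
    (hrec : ∀ O, ¬ NRecording n (A.objType O)) {δ : List (Event n)}
    (hδ : BivalentFrom A input δ δ) :
    ∃ α l k, CrashBudget 0 α ∧ IsStage A input k (stepsThenCrashes (δ ++ α) l k) ∧
      ∀ K < n, ∀ v, UpperUnivalent A input K δ v →
        (∀ e ∈ α, eventBy (processesFrom n K) e) → k < K := by
  obtain ⟨σ, hσ⟩ := hδ.exists_criticalFrom hA hW
  obtain ⟨α, hα, rfl⟩ := hσ.1
  obtain ⟨S⟩ := hσ.nonempty_teamStructure hn hW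
  obtain ⟨l, k, hstage, hdrop⟩ := S.exists_isStage hn hA hW (hrec _)
  exact ⟨α, l, k, hα, hstage, hdrop⟩

lemma exists_stageChain {k₀ : ℕ} {δ₀ : List (Event n)} (h₀ : IsStage A input k₀ δ₀)
    (hnext : ∀ K δ, IsStage A input K δ → ∃ α l k, CrashBudget 0 α ∧
      IsStage A input k (stepsThenCrashes (δ ++ α) l k) ∧
      ((∀ e ∈ α, eventBy (processesFrom n K) e) → k < K)) :
    ∃ S : StageChain n, ∀ t, IsStage A input (S.K t) (S.δ t) := by
  choose! α l k hα hstage hdrop using hnext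
  let next (s : ℕ × List (Event n)) : ℕ × List (Event n) :=
    (k s.1 s.2, stepsThenCrashes (s.2 ++ α s.1 s.2) (l s.1 s.2) (k s.1 s.2))
  let f (t : ℕ) : ℕ × List (Event n) := next^[t] (k₀, δ₀)
  have hf (t : ℕ) : f (t + 1) = next (f t) := Function.iterate_succ_apply' next t _
  have hfstage (t : ℕ) : IsStage A input (f t).1 (f t).2 := by
    induction t with
    | zero => exact h₀
    | succ t ih => exact hf t ▸ hstage _ _ ih
  exact ⟨{  δ := fun t => (f t).2
            α := fun t => α (f t).1 (f t).2
            l := fun t => l (f t).1 (f t).2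
            K := fun t => (f t).1
            succ_eq := fun t => by rw [hf t]
            crashBudget := fun t => hα _ _ (hfstage t)
            lt := fun t => (hfstage t).lt
            lt_of_eventBy := fun t h => hf t ▸ hdrop _ _ (hfstage t) h }, hfstage⟩

lemma SolvesRecConsensus.exists_nRecording (hn : 1 < n) (h : SolvesRecConsensus A) :
    ∃ O, NRecording n (A.objType O) := by
  obtain ⟨hA, hV, hW⟩ := h
  by_contra! hrec
  obtain ⟨α₀, l₀, k₀, -, h₀, -⟩ := (bivalentFrom_nil hn hV hW).exists_isStage hn hA hW hrec
  obtain ⟨S, hS⟩ := exists_stageChain h₀ fun K δ hδ => by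
    obtain ⟨α, l, k, hα, hstage, hdrop⟩ := hδ.bivalent.exists_isStage hn hA hW hrec
    obtain ⟨v, hv⟩ := hδ.univalent
    exact ⟨α, l, k, hα, hstage, hdrop K hδ.lt v hv⟩
  obtain ⟨t, v, hv⟩ := S.exists_decides hW _
  exact (hS t).bivalent.not_decides hA v hv

/-- A write by a process of one team hides an earlier step of a process of the other team, and reads
hide each other. -/
lemma not_nRecording_registerType (n : ℕ) (V : Type) : ¬ NRecording n (RegisterType V) := by
  rintro ⟨u, team, o, hboth, hdisj, -⟩
  obtain ⟨i, hi⟩ := hboth false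
  obtain ⟨j, hj⟩ := hboth true
  have hij : i ≠ j := fun h => Bool.false_ne_true (hi.symm.trans ((congrArg team h).trans hj))
  rw [Set.eq_empty_iff_forall_notMem] at hdisj
  cases hoi : o i with
  | some a =>
    refine hdisj a ⟨⟨i, [], hi, by simp, ?_⟩, ⟨j, [i], hj, by simp [hij.symm], ?_⟩⟩ <;>
      simp [applyOps, RegisterType, hoi]
  | none =>
    cases hoj : o j with
    | some b =>
      refine hdisj b ⟨⟨i, [j], hi, by simp [hij], ?_⟩, ⟨j, [], hj, by simp, ?_⟩⟩ <;>
        simp [applyOps, RegisterType, hoj]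
    | none =>
      refine hdisj u ⟨⟨i, [], hi, by simp, ?_⟩, ⟨j, [], hj, by simp, ?_⟩⟩ <;>
        simp [applyOps, RegisterType, hoi, hoj] <;> rfl

end Recording

end RecoverableConsensus

namespace RecoverableConsensus

/-! ### Agreement of two teams on a readable recording object -/

/-- A readable `n`-recording type with its witnesses. The roles `i : Fin n` stand for the recording
operations `op i`, and `encode` is the response of the operation `read` to a value. -/
structure ReadableRecording (n : ℕ) (T : DetType) where
  read : T.Op
  encode : T.Value → T.Resp
  encode_injective : Function.Injective encode
  δ_read : ∀ z, T.δ z read = (encode z, z)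
  initial : T.Value
  team : Fin n → Bool
  op : Fin n → T.Op
  disjoint : ∀ x, ∀ z ∈ UVals T op initial team x, z ∉ UVals T op initial team !x
  role_unique : ∀ x, (initial ∈ UVals T op initial team !x) →
    ∀ i j, team i = x → team j = x → i = j

/-- The phases of a process that takes part in the agreement of the two teams at a node: announce
the own value in the register of the own team, read the recording object, check the register of the
other team, apply the recording operation, read the recording object again, fetch the value
announced by the winning team `y`. -/
inductive Phase : Type where
  | announce
  | look
  | check
  | record
  | relook
  | fetch (y : Bool)

/-- The values of the shared objects of a node: a recording object, and for each team a register for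
the value it announces. -/
structure NodeContents (T : DetType) where
  object : T.Value
  register : Bool → Option Bool

/-- The contents of a node with two auxiliary variables of the correctness proof: the winning team,
and the list of the roles recorded since the object last had its initial value. -/
structure NodeState (n : ℕ) (T : DetType) extends NodeContents T where
  winner : Option Bool
  recorded : List (Fin n)

variable {n : ℕ} {T : DetType}

/-- The response to a step on a register of a process with the value `v`: a new phase, or the value
with which the process leaves the node. -/
def Phase.afterRegister (v : Bool) : Phase → Option Bool → Phase ⊕ Bool
  | announce, _ => .inl look
  | check, none => .inl record
  | check, some w => .inr w
  | fetch _, r => .inr (r.getD v)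
  | ph, _ => .inl ph

lemma applyOps_mem_UVals {o : Fin n → T.Op} {u : T.Value} {team : Fin n → Bool} {x : Bool}
    {l : List (Fin n)} (hl : l ≠ []) (hnodup : l.Nodup) (hhead : ∀ i ∈ l.head?, team i = x) :
    applyOps T o u l ∈ UVals T o u team x := by
  obtain ⟨i, l, rfl⟩ := List.exists_cons_of_ne_nil hl
  exact ⟨i, l, hhead i rfl, hnodup, rfl⟩

namespace ReadableRecording

variable (R : ReadableRecording n T)

/-- The values of the object that record team `x` as the first one. -/
abbrev teamValues (x : Bool) : Set T.Value := UVals T R.op R.initial R.team x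

open scoped Classical in
/-- The team that is recorded by the value whose encoding is read. -/
noncomputable def winnerOf (r : T.Resp) : Bool := decide (∃ z ∈ R.teamValues true, R.encode z = r)

lemma winnerOf_encode {z : T.Value} {x : Bool} (hz : z ∈ R.teamValues x) :
    R.winnerOf (R.encode z) = x := by
  classical
  cases x with
  | true => exact decide_eq_true ⟨z, hz, rfl⟩
  | false =>
    refine decide_eq_false ?_
    rintro ⟨z', hz', he⟩
    exact R.disjoint false z hz (R.encode_injective he ▸ hz')

open scoped Classical in
/-- The response to a step on the recording object of a process with the role `r`. -/
noncomputable def afterObject (r : Fin n) : Phase → T.Resp → Phase ⊕ Bool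
  | .look, resp =>
    if resp = R.encode R.initial then
      if R.initial ∈ R.teamValues (!R.team r) then .inl .check else .inl .record
    else .inl (.fetch (R.winnerOf resp))
  | .record, _ => .inl .relook
  | .relook, resp => .inl (.fetch (R.winnerOf resp))
  | ph, _ => .inl ph

/-- The effect of a step at a node of a process with the role `r` and the value `v`. -/
noncomputable def step (r : Fin n) (v : Bool) :
    Phase → NodeContents T → (Phase ⊕ Bool) × NodeContents T
  | .announce, N =>
    (Phase.announce.afterRegister v (some v),
      { N with register := Function.update N.register (R.team r) (some v) })
  | .look, N => (R.afterObject r .look (R.encode N.object), N)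
  | .check, N => (Phase.check.afterRegister v (N.register !R.team r), N)
  | .record, N =>
    (R.afterObject r .record (T.δ N.object (R.op r)).1,
      { N with object := (T.δ N.object (R.op r)).2 })
  | .relook, N => (R.afterObject r .relook (R.encode N.object), N)
  | .fetch y, N => ((Phase.fetch y).afterRegister v (N.register y), N)

end ReadableRecording

/-- The invariant of a node. -/
structure NodeState.Valid (R : ReadableRecording n T) (N : NodeState n T) : Prop where
  object_eq : N.object = applyOps T R.op R.initial N.recorded
  nodup : N.recorded.Nodup
  recorded_of_initial : N.object = R.initial → N.recorded = []
  recorded_of_winner_none : N.winner = none → N.recorded = []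
  register_ne_none : ∀ x, N.winner = some x → N.register x ≠ none
  initial_mem : ∀ x, N.winner = some x → N.recorded = [] → R.initial ∈ R.teamValues x
  team_head : ∀ x, N.winner = some x → ∀ i ∈ N.recorded.head?, R.team i = x

/-- What is known about a node while a process with the role `r` is there in the given phase. -/
def Phase.Sound (R : ReadableRecording n T) (N : NodeState n T) (r : Fin n) : Phase → Prop
  | announce => True
  | look => N.register (R.team r) ≠ none
  | check => N.register (R.team r) ≠ none ∧ r ∉ N.recorded ∧
      R.initial ∈ R.teamValues (!R.team r) ∧ N.winner ≠ some (R.team r)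
  | record => N.register (R.team r) ≠ none ∧ r ∉ N.recorded ∧
      (N.winner = some (!R.team r) → N.recorded ≠ [])
  | relook => N.winner ≠ none
  | fetch y => N.winner = some y

namespace NodeState

/-- The value announced by the winning team, on which all processes at the node agree. -/
def outcome (N : NodeState n T) : Option Bool := N.winner.bind N.register

/-- `N'` keeps the announced values and the winner of `N`. -/
structure Extends (N N' : NodeState n T) : Prop where
  register : ∀ x w, N.register x = some w → N'.register x = some w
  winner : ∀ x, N.winner = some x → N'.winner = some x

/-- The transition from `N` to `N'` is harmless for the processes with roles other than `r` if it is
made by a process with the role `r` and the value `v`. -/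
structure Move (R : ReadableRecording n T) (r : Fin n) (v : Bool) (N N' : NodeState n T) : Prop
    extends Extends N N' where
  valid : N'.Valid R
  register_origin : ∀ x w, N'.register x = some w →
    N.register x = some w ∨ x = R.team r ∧ w = v
  sound_of_ne : ∀ q, q ≠ r → ∀ ph : Phase, ph.Sound R N q → ph.Sound R N' q

/-- The result of a step is a phase about which everything is known that should be, or the
outcome. -/
def ResultSound (R : ReadableRecording n T) (N : NodeState n T) (r : Fin n) :
    Phase ⊕ Bool → Prop
  | .inl ph => ph.Sound R N r
  | .inr w => N.outcome = some w

variable {R : ReadableRecording n T} {N N' : NodeState n T} {r : Fin n} {v : Bool}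

lemma Extends.outcome_eq (h : Extends N N') {w : Bool} (hw : N.outcome = some w) :
    N'.outcome = some w := by
  obtain ⟨x, hx, hxw⟩ := Option.bind_eq_some_iff.1 hw
  exact Option.bind_eq_some_iff.2 ⟨x, h.winner x hx, h.register x w hxw⟩

lemma Extends.register_ne_none (h : Extends N N') {x : Bool} (hx : N.register x ≠ none) :
    N'.register x ≠ none := by
  obtain ⟨w, hw⟩ := Option.ne_none_iff_exists'.1 hx
  simp [h.register x w hw]

namespace Valid

lemma object_mem (hN : N.Valid R) {x : Bool} (hx : N.winner = some x) :
    N.object ∈ R.teamValues x := by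
  by_cases hnil : N.recorded = []
  · rw [hN.object_eq, hnil]
    exact hN.initial_mem x hx hnil
  · rw [hN.object_eq]
    exact applyOps_mem_UVals hnil hN.nodup (hN.team_head x hx)

lemma move_self (hN : N.Valid R) : Move R r v N N where
  register _ _ h := h
  winner _ h := h
  valid := hN
  register_origin _ _ h := Or.inl h
  sound_of_ne _ _ _ h := h

lemma sound_afterObject_look (hN : N.Valid R) (hr : Phase.look.Sound R N r) :
    ResultSound R N r (R.afterObject r .look (R.encode N.object)) := by
  simp only [ReadableRecording.afterObject]
  split_ifs with henc hmem
  · have hobj := R.encode_injective henc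
    refine ⟨hr, by simp [hN.recorded_of_initial hobj], hmem, fun hw => ?_⟩
    have := hN.object_mem hw
    rw [hobj] at this
    exact R.disjoint _ _ this hmem
  · have hobj := R.encode_injective henc
    refine ⟨hr, by simp [hN.recorded_of_initial hobj], fun hw => ?_⟩
    have := hN.object_mem hw
    rw [hobj] at this
    exact absurd this hmem
  · obtain ⟨x, hx⟩ := Option.ne_none_iff_exists'.1 fun hw : N.winner = none => henc <| by
      rw [hN.object_eq, hN.recorded_of_winner_none hw, applyOps]
    change N.winner = some _
    rw [R.winnerOf_encode (hN.object_mem hx), hx]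

lemma sound_afterObject_relook (hN : N.Valid R) (hr : Phase.relook.Sound R N r) :
    ResultSound R N r (R.afterObject r .relook (R.encode N.object)) := by
  obtain ⟨x, hx⟩ := Option.ne_none_iff_exists'.1 hr
  change N.winner = some _
  rw [R.winnerOf_encode (hN.object_mem hx), hx]

lemma sound_afterRegister_fetch (hN : N.Valid R) {y : Bool} (hr : (Phase.fetch y).Sound R N r) :
    ResultSound R N r ((Phase.fetch y).afterRegister v (N.register y)) := by
  have hy : N.winner = some y := hr
  obtain ⟨w, hw⟩ := Option.ne_none_iff_exists'.1 (hN.register_ne_none y hy)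
  simp [Phase.afterRegister, ResultSound, outcome, hy, hw]

lemma sound_afterRegister_check (hN : N.Valid R) (hr : Phase.check.Sound R N r)
    (hreg : N.register (!R.team r) = none) :
    ResultSound R N r (Phase.check.afterRegister v (N.register !R.team r)) := by
  rw [hreg]
  exact ⟨hr.1, hr.2.1, fun hw => absurd hreg (hN.register_ne_none _ hw)⟩

end Valid

/-- The state after a process with the role `r` has announced the value `v`. -/
def announce (R : ReadableRecording n T) (r : Fin n) (v : Bool) (N : NodeState n T) :
    NodeState n T :=
  { N with register := Function.update N.register (R.team r) (some v) }

lemma Valid.move_announce (hN : N.Valid R)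
    (hv : ∀ w, N.register (R.team r) = some w → w = v) : Move R r v N (N.announce R r v) := by
  have hregister : ∀ x w, N.register x = some w → (N.announce R r v).register x = some w := by
    intro x w hw
    by_cases hx : x = R.team r
    · subst hx
      simp [announce, hv w hw]
    · simpa [announce, hx] using hw
  have hext : Extends N (N.announce R r v) := ⟨hregister, fun _ h => h⟩
  refine ⟨hext, ?_, fun x w hw => ?_, fun q _ ph hph => ?_⟩
  · exact { hN with
      register_ne_none := fun x hx => hext.register_ne_none (hN.register_ne_none x hx) }
  · by_cases hx : x = R.team r
    · subst hx
      right
      simpa [announce, eq_comm] using hw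
    · left
      simpa [announce, hx] using hw
  · cases ph with
    | announce => trivial
    | look => exact hext.register_ne_none hph
    | check => exact ⟨hext.register_ne_none hph.1, hph.2⟩
    | record => exact ⟨hext.register_ne_none hph.1, hph.2⟩
    | relook => exact hph
    | fetch y => exact hph

/-- The state after a process with the role `r` has adopted the value announced by the other
team. -/
def concede (R : ReadableRecording n T) (r : Fin n) (N : NodeState n T) : NodeState n T :=
  { N with winner := some !R.team r }

lemma sound_concede_of_ne (hr : Phase.check.Sound R N r) {q : Fin n} (hq : q ≠ r) {ph : Phase}
    (hph : ph.Sound R N q) (hext : Extends N (N.concede R r)) :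
    ph.Sound R (N.concede R r) q := by
  obtain ⟨-, -, hmem, -⟩ := hr
  have hteam : R.team q = !R.team r :=
    Bool.eq_not.2 fun h => hq (R.role_unique _ hmem q r h rfl)
  cases ph with
  | announce => trivial
  | look => exact hph
  | check =>
    obtain ⟨-, -, hmem', -⟩ := hph
    rw [hteam, Bool.not_not] at hmem'
    exact absurd hmem (R.disjoint _ _ hmem')
  | record => exact ⟨hph.1, hph.2.1, fun hw => by simp [concede, hteam] at hw⟩
  | relook => simp [Phase.Sound, concede]
  | fetch y => exact hext.winner y hph

-- The conceding process is the only one of its team, so the other team may be declared the winner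
-- even though nothing has been recorded.
lemma Valid.move_concede (hN : N.Valid R) (hr : Phase.check.Sound R N r)
    (hreg : N.register (!R.team r) ≠ none) : Move R r v N (N.concede R r) := by
  obtain ⟨-, -, hmem, hwin⟩ := id hr
  have hwinner : ∀ x, N.winner = some x → x = !R.team r := fun x hx =>
    Bool.eq_not.2 fun h => hwin (hx.trans (congrArg some h))
  have hext : Extends N (N.concede R r) :=
    ⟨fun _ _ h => h, fun x hx => by rw [concede, hwinner x hx]⟩
  refine ⟨hext, ?_, fun _ _ h => Or.inl h, fun q hq ph hph => sound_concede_of_ne hr hq hph hext⟩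
  refine { hN with
    recorded_of_winner_none := nofun
    register_ne_none := fun x hx => ?_
    initial_mem := fun x hx _ => ?_
    team_head := fun x hx i hi => ?_ }
  · exact Option.some.inj hx ▸ hreg
  · exact Option.some.inj hx ▸ hmem
  · cases hw : N.winner with
    | none => simp [concede, hN.recorded_of_winner_none hw] at hi
    | some y =>
      exact (hN.team_head y hw i hi).trans ((hwinner y hw).trans (Option.some.inj hx))

open scoped Classical in
/-- The state after a process has applied the recording operation of the role `r`. -/
noncomputable def record (R : ReadableRecording n T) (r : Fin n) (N : NodeState n T) :
    NodeState n T where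
  object := (T.δ N.object (R.op r)).2
  register := N.register
  winner := some (N.winner.getD (R.team r))
  recorded := if (T.δ N.object (R.op r)).2 = R.initial then [] else N.recorded ++ [r]

lemma extends_record : Extends N (N.record R r) :=
  ⟨fun _ _ h => h, fun x hx => by simp [record, hx]⟩

lemma recorded_record_of_eq (h : (N.record R r).object = R.initial) :
    (N.record R r).recorded = [] :=
  if_pos h

lemma recorded_record_of_ne (h : (N.record R r).object ≠ R.initial) :
    (N.record R r).recorded = N.recorded ++ [r] :=
  if_neg h

lemma notMem_recorded_record {q : Fin n} (hq : q ≠ r) (hmem : q ∉ N.recorded) :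
    q ∉ (N.record R r).recorded := by
  simp only [record]
  split_ifs <;> simp [hq, hmem]

namespace Valid

lemma object_record (hN : N.Valid R) :
    (N.record R r).object = applyOps T R.op R.initial (N.recorded ++ [r]) := by
  rw [applyOps_append, ← hN.object_eq]
  rfl

lemma nodup_append (hN : N.Valid R) (hr : Phase.record.Sound R N r) :
    (N.recorded ++ [r]).Nodup :=
  List.Nodup.append hN.nodup (List.nodup_singleton r) (by simpa using hr.2.1)

lemma team_head_append (hN : N.Valid R) (hr : Phase.record.Sound R N r) :
    ∀ i ∈ (N.recorded ++ [r]).head?, R.team i = N.winner.getD (R.team r) := by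
  intro i hi
  cases hw : N.winner with
  | none =>
    rw [hN.recorded_of_winner_none hw] at hi
    exact congrArg R.team (Option.some.inj hi).symm
  | some x =>
    cases hrec : N.recorded with
    | nil =>
      have hne : x ≠ !R.team r := fun h => hr.2.2 (h ▸ hw) hrec
      rw [hrec] at hi
      rw [← Option.some.inj hi]
      simpa [eq_comm] using hne
    | cons j l =>
      rw [hrec] at hi
      refine hN.team_head x hw i ?_
      rwa [hrec]

lemma object_record_mem (hN : N.Valid R) (hr : Phase.record.Sound R N r) :
    (N.record R r).object ∈ R.teamValues (N.winner.getD (R.team r)) := by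
  rw [hN.object_record]
  exact applyOps_mem_UVals (by simp) (hN.nodup_append hr) (hN.team_head_append hr)

-- If the initial value were restored, the next operation of the other team would lead to a value
-- that records both teams.
lemma object_record_ne_initial (hN : N.Valid R) (hr : Phase.record.Sound R N r) {q : Fin n}
    (hq : q ∉ N.recorded ++ [r]) (hteam : R.team q = !N.winner.getD (R.team r)) :
    (N.record R r).object ≠ R.initial := by
  intro hinit
  have hsingle : applyOps T R.op R.initial [q] ∈ R.teamValues (R.team q) :=
    applyOps_mem_UVals (by simp) (by simp) (by simp)
  refine R.disjoint _ _ ?_ (hteam ▸ hsingle)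
  have heq : applyOps T R.op R.initial (N.recorded ++ [r] ++ [q]) =
      applyOps T R.op R.initial [q] := by
    rw [applyOps_append, ← hN.object_record, hinit]
  rw [← heq]
  refine applyOps_mem_UVals (by simp) ?_ fun i hi => hN.team_head_append hr i ?_
  · exact List.Nodup.append (hN.nodup_append hr) (by simp) (by simpa using hq)
  · rwa [List.head?_append_of_ne_nil _ (by simp)] at hi

lemma record (hN : N.Valid R) (hr : Phase.record.Sound R N r) : (N.record R r).Valid R where
  object_eq := by
    by_cases hinit : (N.record R r).object = R.initial
    · rw [hinit, recorded_record_of_eq hinit, applyOps]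
    · rw [recorded_record_of_ne hinit, hN.object_record]
  nodup := by
    simp only [NodeState.record]
    split_ifs
    · exact List.nodup_nil
    · exact hN.nodup_append hr
  recorded_of_initial := recorded_record_of_eq
  recorded_of_winner_none := nofun
  register_ne_none x hx := by
    obtain rfl := Option.some.inj hx
    cases hw : N.winner with
    | none => exact hr.1
    | some y => exact hN.register_ne_none y hw
  initial_mem x hx hnil := by
    obtain rfl := Option.some.inj hx
    by_cases hinit : (N.record R r).object = R.initial
    · rw [← hinit]
      exact hN.object_record_mem hr
    · simp [recorded_record_of_ne hinit] at hnil
  team_head x hx i hi := by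
    obtain rfl := Option.some.inj hx
    by_cases hinit : (N.record R r).object = R.initial
    · simp [recorded_record_of_eq hinit] at hi
    · rw [recorded_record_of_ne hinit] at hi
      exact hN.team_head_append hr i hi

lemma sound_record_of_ne (hN : N.Valid R) (hr : Phase.record.Sound R N r) {q : Fin n}
    (hq : q ≠ r) {ph : Phase} (hph : ph.Sound R N q) : ph.Sound R (N.record R r) q := by
  cases ph with
  | announce => trivial
  | look => exact hph
  | check =>
    obtain ⟨hreg, hmem, hinit, hwin⟩ := hph
    refine ⟨hreg, notMem_recorded_record hq hmem, hinit, fun hw => hq ?_⟩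
    have hteam : N.winner.getD (R.team r) = R.team q := Option.some.inj hw
    refine R.role_unique _ hinit q r rfl ?_
    cases hw' : N.winner with
    | none => rwa [hw'] at hteam
    | some x =>
      rw [hw'] at hteam
      exact absurd (hw'.trans (congrArg some hteam)) hwin
  | record =>
    obtain ⟨hreg, hmem, -⟩ := hph
    refine ⟨hreg, notMem_recorded_record hq hmem, fun hw => ?_⟩
    have hteam : N.winner.getD (R.team r) = !R.team q := Option.some.inj hw
    have hne : (N.record R r).object ≠ R.initial :=
      hN.object_record_ne_initial hr (q := q) (by simp [hmem, hq]) (by simp [hteam])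
    simp [recorded_record_of_ne hne]
  | relook => simp [Phase.Sound, NodeState.record]
  | fetch y => exact extends_record.winner y hph

lemma move_record (hN : N.Valid R) (hr : Phase.record.Sound R N r) :
    Move R r v N (N.record R r) where
  toExtends := extends_record
  valid := hN.record hr
  register_origin _ _ h := Or.inl h
  sound_of_ne _ hq _ hph := hN.sound_record_of_ne hr hq hph

lemma exists_move (hN : N.Valid R) {ph : Phase} (hr : ph.Sound R N r)
    (hv : ∀ w, N.register (R.team r) = some w → w = v) :
    ∃ N' : NodeState n T, N'.toNodeContents = (R.step r v ph N.toNodeContents).2 ∧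
      Move R r v N N' ∧ ResultSound R N' r (R.step r v ph N.toNodeContents).1 := by
  cases ph with
  | announce =>
    exact ⟨_, rfl, hN.move_announce hv, by
      simp [ReadableRecording.step, Phase.afterRegister, ResultSound, Phase.Sound, announce]⟩
  | look => exact ⟨N, rfl, hN.move_self, hN.sound_afterObject_look hr⟩
  | check =>
    by_cases hreg : N.register (!R.team r) = none
    · exact ⟨N, rfl, hN.move_self, sound_afterRegister_check hN hr hreg⟩
    · refine ⟨N.concede R r, rfl, hN.move_concede hr hreg, ?_⟩
      obtain ⟨w, hw⟩ := Option.ne_none_iff_exists'.1 hreg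
      simp [ReadableRecording.step, hw, Phase.afterRegister, ResultSound, outcome, concede]
  | record =>
    exact ⟨N.record R r, rfl, hN.move_record hr, by
      simp [ReadableRecording.step, ReadableRecording.afterObject, ResultSound, Phase.Sound,
        NodeState.record]⟩
  | relook => exact ⟨N, rfl, hN.move_self, hN.sound_afterObject_relook hr⟩
  | fetch y => exact ⟨N, rfl, hN.move_self, hN.sound_afterRegister_fetch hr⟩

end Valid

end NodeState

end RecoverableConsensus

namespace RecoverableConsensus

/-! ### Brackets of a tournament -/

/-- A bracket of a binary tournament among the processes: `node d p` is the node of depth `d` on the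
way of `p` from the root to its leaf, given by the turns that lead there, and `role d p` is the role
of `p` at this node. The processes that meet at a node play different roles, those that play for the
same team proceed to the same child, and a process is alone at depth `n`. -/
structure Bracket {n : ℕ} (team : Fin n → Bool) where
  node : ℕ → Fin n → List Bool
  role : ℕ → Fin n → Fin n
  length_node : ∀ d p, (node d p).length = d
  eq_of_role_eq : ∀ {d p q}, node d p = node d q → role d p = role d q → p = q
  node_succ : ∀ {d p q}, node d p = node d q → team (role d p) = team (role d q) →
    node (d + 1) p = node (d + 1) q
  eq_of_node_eq : ∀ {d p q}, n ≤ d → node d p = node d q → p = q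

lemma exists_perm_forall_bool {α : Type*} {f : α → Bool} (hf : Function.Surjective f)
    {s : Set α} (hs : s.Nontrivial) : ∃ ρ : Equiv.Perm α, ∀ x, ∃ i ∈ s, f (ρ i) = x := by
  obtain ⟨a, ha, b, hb, hab⟩ := hs
  obtain ⟨i, hi⟩ := hf false
  obtain ⟨j, hj⟩ := hf true
  have hij : i ≠ j := by
    rintro rfl
    exact Bool.false_ne_true (hi.symm.trans hj)
  obtain ⟨ρ, hρa, hρb⟩ := MulAction.is_two_pretransitive_iff.1
    (Equiv.Perm.isMultiplyPretransitive α 2) hab hij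
  refine ⟨ρ, Bool.forall_bool.2 ⟨⟨a, ha, ?_⟩, ⟨b, hb, ?_⟩⟩⟩
  · rw [← hi, ← hρa, Equiv.Perm.smul_def]
  · rw [← hj, ← hρb, Equiv.Perm.smul_def]

section Descent

variable {n : ℕ} (team : Fin n → Bool) (ρ : Finset (Fin n) → Equiv.Perm (Fin n))

/-- The turns of a process on its way from the root, the last one first, if the processes of a set
`s` that meet at a node receive their roles from `ρ s` and turn according to their teams. -/
def descent : ℕ → Fin n → List Bool
  | 0, _ => []
  | d + 1, p =>
    team (ρ (Finset.univ.filter fun q => descent d q = descent d p) p) :: descent d p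

/-- The processes that `p` meets at depth `d`. -/
def visitors (d : ℕ) (p : Fin n) : Finset (Fin n) :=
  Finset.univ.filter fun q => descent team ρ d q = descent team ρ d p

variable {team ρ} {d : ℕ} {p q : Fin n}

lemma descent_succ :
    descent team ρ (d + 1) p = team (ρ (visitors team ρ d p) p) :: descent team ρ d p := rfl

lemma length_descent (d : ℕ) (p : Fin n) : (descent team ρ d p).length = d := by
  induction d with
  | zero => rfl
  | succ d ih => rw [descent_succ, List.length_cons, ih]

lemma mem_visitors : q ∈ visitors team ρ d p ↔ descent team ρ d q = descent team ρ d p := by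
  simp [visitors]

lemma visitors_congr (h : descent team ρ d p = descent team ρ d q) :
    visitors team ρ d p = visitors team ρ d q := by
  simp only [visitors, h]

lemma visitors_succ_subset : visitors team ρ (d + 1) p ⊆ visitors team ρ d p := fun q hq => by
  rw [mem_visitors, descent_succ, descent_succ] at hq
  exact mem_visitors.2 (List.cons.inj hq).2

lemma visitors_succ_ssubset
    (hρ : ∀ x, ∃ i ∈ visitors team ρ d p, team (ρ (visitors team ρ d p) i) = x) :
    visitors team ρ (d + 1) p ⊂ visitors team ρ d p := by
  obtain ⟨i, hi, hteam⟩ := hρ (!team (ρ (visitors team ρ d p) p))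
  refine (Finset.ssubset_iff_of_subset visitors_succ_subset).2 ⟨i, hi, fun hi' => ?_⟩
  rw [mem_visitors, descent_succ, descent_succ, visitors_congr (mem_visitors.1 hi)] at hi'
  exact Bool.not_ne_self _ (hteam.symm.trans (List.cons.inj hi').1)

lemma card_visitors_add_le
    (hρ : ∀ s : Finset (Fin n), s.Nontrivial → ∀ x, ∃ i ∈ s, team (ρ s i) = x) :
    ∀ d, (visitors team ρ d p).Nontrivial → (visitors team ρ d p).card + d ≤ n
  | 0, _ => by simpa using Finset.card_le_univ (visitors team ρ 0 p)
  | d + 1, h => by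
    have hd : (visitors team ρ d p).Nontrivial := h.mono visitors_succ_subset
    have := card_visitors_add_le hρ d hd
    have := Finset.card_lt_card (visitors_succ_ssubset (hρ _ hd))
    omega

end Descent

lemma nonempty_bracket {n : ℕ} {team : Fin n → Bool} (hteam : Function.Surjective team) :
    Nonempty (Bracket team) := by
  have hperm (s : Finset (Fin n)) : ∃ ρ : Equiv.Perm (Fin n),
      s.Nontrivial → ∀ x, ∃ i ∈ s, team (ρ i) = x := by
    by_cases hs : s.Nontrivial
    · exact (exists_perm_forall_bool hteam hs).imp fun _ h _ => h
    · exact ⟨1, fun h => absurd h hs⟩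
  choose ρ hρ using hperm
  exact ⟨{
    node := descent team ρ
    role := fun d p => ρ (visitors team ρ d p) p
    length_node := length_descent
    eq_of_role_eq := fun h hrole => by
      rw [visitors_congr h] at hrole
      exact (ρ _).injective hrole
    node_succ := fun h hturn => by rw [descent_succ, descent_succ, hturn, h]
    eq_of_node_eq := fun {d p q} hd h => by
      by_contra hpq
      have hq : (visitors team ρ d q).Nontrivial :=
        ⟨p, mem_visitors.2 h, q, mem_visitors.2 rfl, hpq⟩
      have := card_visitors_add_le hρ d hq
      have := Finset.one_lt_card_iff_nontrivial.2 hq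
      omega }⟩

end RecoverableConsensus

namespace RecoverableConsensus

/-! ### The tournament algorithm -/

/-- The shared objects of the tournament: at each node `nd` a recording object and, for each team
`x`, a register. -/
inductive SharedObject : Type where
  | recorder (nd : List Bool)
  | register (nd : List Bool) (x : Bool)

/-- The type of a shared object, where the recording objects have the type `T`. Registers hold no
value initially. -/
def SharedObject.type (T : DetType) : SharedObject → DetType
  | recorder _ => T
  | register _ _ => RegisterType (Option Bool)

/-- The state of a process in the tournament: it has decided, or it is at its node of depth `d` with
the value `v`. -/
inductive TournamentState : Type where
  | decided (w : Bool)
  | busy (d : ℕ) (v : Bool) (ph : Phase)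

namespace TournamentState

/-- The state of a process that leaves its node of depth `d` with the value `w`. -/
def leave : ℕ → Bool → TournamentState
  | 0, w => decided w
  | d + 1, w => busy d w .announce

/-- The state of a process at its node of depth `d` with the value `v`, after a step there. -/
def resume (d : ℕ) (v : Bool) : Phase ⊕ Bool → TournamentState
  | .inl ph => busy d v ph
  | .inr w => leave d w

/-- The decision of a process. -/
def output : TournamentState → Option Bool
  | decided w => some w
  | busy _ _ _ => none

end TournamentState

open TournamentState

variable {n : ℕ} {T : DetType}

section Algorithm

variable (R : ReadableRecording n T) (B : Bracket R.team)

/-- The operation that a process performs in a phase at the node `nd`, in the role `r` and with the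
value `v`. -/
def ReadableRecording.request (nd : List Bool) (r : Fin n) (v : Bool) :
    Phase → (o : SharedObject) × (o.type T).Op
  | .announce => ⟨.register nd (R.team r), (some (some v) : Option (Option Bool))⟩
  | .look => ⟨.recorder nd, R.read⟩
  | .check => ⟨.register nd (!R.team r), (none : Option (Option Bool))⟩
  | .record => ⟨.recorder nd, R.op r⟩
  | .relook => ⟨.recorder nd, R.read⟩
  | .fetch y => ⟨.register nd y, (none : Option (Option Bool))⟩

/-- The tournament: a process ascends from its leaf to the root. At each node it takes part, with
the value it brings from below, in the agreement of two teams, all members of which bring the same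
value. -/
noncomputable def tournament : Algorithm n where
  ObjIdx := SharedObject
  objType := SharedObject.type T
  objInit := fun
    | .recorder _ => R.initial
    | .register _ _ => (none : Option Bool)
  PState _ := TournamentState
  init _ b := busy (n - 1) b .announce
  pending p := fun
    | decided _ => none
    | busy d v ph => some (R.request (B.node d p) (B.role d p) v ph)
  next p := fun
    | decided w => fun _ _ => decided w
    | busy d v ph => fun
      | .recorder _ => fun r => resume d v (R.afterObject (B.role d p) ph r)
      | .register _ _ => fun r => resume d v (ph.afterRegister v r)
  output _ := TournamentState.output
  output_noop _ s h := by
    cases s with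
    | decided w => rfl
    | busy d v ph => exact absurd rfl h

/-- The contents of a node, given the values of all shared objects. -/
def contents (V : (o : SharedObject) → (o.type T).Value) (nd : List Bool) : NodeContents T where
  object := V (.recorder nd)
  register x := V (.register nd x)

variable {R B} [DecidableEq SharedObject] {V : (o : SharedObject) → (o.type T).Value}
  {nd : List Bool}

lemma contents_update_recorder (z : T.Value) :
    contents (Function.update V (.recorder nd) z) =
      Function.update (contents V) nd { contents V nd with object := z } := by
  funext nd'
  by_cases h : nd' = nd
  · subst h
    rw [Function.update_self]
    exact congrArg₂ NodeContents.mk (Function.update_self _ _ V)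
      (funext fun _ => Function.update_of_ne (by simp) _ V)
  · rw [Function.update_of_ne h]
    exact congrArg₂ NodeContents.mk (Function.update_of_ne (by simpa using h) _ V)
      (funext fun _ => Function.update_of_ne (by simp) _ V)

lemma contents_update_register (x : Bool) (w : Option Bool) :
    contents (Function.update V (.register nd x) w) = Function.update (contents V) nd
      { contents V nd with register := Function.update (contents V nd).register x w } := by
  funext nd'
  by_cases h : nd' = nd
  · subst h
    rw [Function.update_self]
    refine congrArg₂ NodeContents.mk (Function.update_of_ne (by simp) _ V) (funext fun x' => ?_)
    by_cases hx : x' = x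
    · subst hx
      rw [Function.update_self]
      exact Function.update_self _ _ V
    · rw [Function.update_of_ne hx]
      exact Function.update_of_ne (by simpa using hx) _ V
  · rw [Function.update_of_ne h]
    exact congrArg₂ NodeContents.mk (Function.update_of_ne (by simp) _ V)
      (funext fun _ => Function.update_of_ne (by simp [h]) _ V)

end Algorithm

section Step

variable {R : ReadableRecording n T} {B : Bracket R.team} {input : Fin n → Bool}
  {C : Config (tournament R B)} {p : Fin n} {d : ℕ} {v : Bool} {ph : Phase}

lemma applyEvent_busy (h : C.pstate p = busy d v ph) :
    (applyEvent (tournament R B) input C (.step p)).pstate = Function.update C.pstate p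
        (resume d v (R.step (B.role d p) v ph (contents C.oval (B.node d p))).1) ∧
      contents (applyEvent (tournament R B) input C (.step p)).oval =
        Function.update (contents C.oval) (B.node d p)
          (R.step (B.role d p) v ph (contents C.oval (B.node d p))).2 := by
  have hpending : (tournament R B).pending p (C.pstate p) =
      some (R.request (B.node d p) (B.role d p) v ph) := by
    rw [h]
    rfl
  classical
  have hread : (applyEvent (tournament R B) input C (.step p)).oval = C.oval →
      contents (applyEvent (tournament R B) input C (.step p)).oval =
        Function.update (contents C.oval) (B.node d p) (contents C.oval (B.node d p)) := by
    intro h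
    rw [h, Function.update_eq_self]
  cases ph with
  | announce =>
    rw [applyEvent_of_pending_some input hpending, h]
    exact ⟨rfl, contents_update_register _ _⟩
  | look =>
    have heq := applyEvent_of_pending_read input hpending (R.δ_read _)
    exact ⟨by rw [heq, h]; rfl, hread (by rw [heq])⟩
  | check =>
    have heq := applyEvent_of_pending_read input hpending rfl
    exact ⟨by rw [heq, h]; rfl, hread (by rw [heq])⟩
  | record =>
    rw [applyEvent_of_pending_some input hpending, h]
    exact ⟨rfl, contents_update_recorder _⟩
  | relook =>
    have heq := applyEvent_of_pending_read input hpending (R.δ_read _)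
    exact ⟨by rw [heq, h]; rfl, hread (by rw [heq])⟩
  | fetch y =>
    have heq := applyEvent_of_pending_read input hpending rfl
    exact ⟨by rw [heq, h]; rfl, hread (by rw [heq])⟩

end Step

/-! ### Correctness of the tournament algorithm -/

/-- The state of a node that nobody has visited. -/
def ReadableRecording.initialNode (R : ReadableRecording n T) : NodeState n T where
  object := R.initial
  register _ := none
  winner := none
  recorded := []

lemma ReadableRecording.valid_initialNode (R : ReadableRecording n T) :
    R.initialNode.Valid R where
  object_eq := rfl
  nodup := List.nodup_nil
  recorded_of_initial _ := rfl
  recorded_of_winner_none _ := rfl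
  register_ne_none := nofun
  initial_mem := nofun
  team_head := nofun

section Invariant

variable {R : ReadableRecording n T} (B : Bracket R.team) (input : Fin n → Bool)
  (ν : List Bool → NodeState n T)

/-- The value with which `p` proceeds to depth `d - 1`: the outcome of its node of depth `d`, or its
input if `d = n` is the depth of its leaf. -/
def outcomeAt (d : ℕ) (p : Fin n) : Option Bool :=
  if d < n then (ν (B.node d p)).outcome else some (input p)

/-- What is known about the nodes while the process `p` is in the given state. -/
def TournamentState.Sound (p : Fin n) : TournamentState → Prop
  | decided w => outcomeAt B input ν 0 p = some w
  | busy d v ph => d < n ∧ outcomeAt B input ν (d + 1) p = some v ∧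
      ph.Sound R (ν (B.node d p)) (B.role d p)

/-- The invariant of the tournament. A value that a team has announced at a node has been brought
there from below by a member of this team. -/
structure TournamentInvariant (s : Fin n → TournamentState) : Prop where
  valid : ∀ nd, (ν nd).Valid R
  register_origin : ∀ nd x w, (ν nd).register x = some w → ∃ d p, d < n ∧ B.node d p = nd ∧
    R.team (B.role d p) = x ∧ outcomeAt B input ν (d + 1) p = some w
  sound : ∀ p, (s p).Sound B input ν p

variable {B input ν} {N : NodeState n T} {nd : List Bool} {s : Fin n → TournamentState}
  {d : ℕ} {p q : Fin n} {v w : Bool}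

lemma Bracket.depth_eq {e : ℕ} (h : B.node e q = B.node d p) : e = d := by
  rw [← B.length_node e q, h, B.length_node]

lemma outcomeAt_of_lt (hd : d < n) : outcomeAt B input ν d p = (ν (B.node d p)).outcome :=
  if_pos hd

lemma outcomeAt_congr (h : B.node d p = B.node d q) :
    outcomeAt B input ν d p = outcomeAt B input ν d q := by
  by_cases hd : d < n
  · rw [outcomeAt_of_lt hd, outcomeAt_of_lt hd, h]
  · rw [B.eq_of_node_eq (not_lt.1 hd) h]

lemma outcomeAt_mono {ν' : List Bool → NodeState n T} (hext : ∀ nd, (ν nd).Extends (ν' nd))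
    (h : outcomeAt B input ν d p = some w) : outcomeAt B input ν' d p = some w := by
  unfold outcomeAt at h ⊢
  split_ifs at h ⊢ with hd
  · exact (hext _).outcome_eq h
  · exact h

lemma NodeState.Extends.update (h : (ν nd).Extends N) (nd' : List Bool) :
    (ν nd').Extends (Function.update ν nd N nd') := by
  by_cases hnd : nd' = nd
  · subst hnd
    rwa [Function.update_self]
  · rw [Function.update_of_ne hnd]
    exact ⟨fun _ _ h => h, fun _ h => h⟩

lemma TournamentState.Sound.update_of_ne {s : TournamentState} (h : s.Sound B input ν q)
    (hmove : NodeState.Move R (B.role d p) v (ν (B.node d p)) N) (hq : q ≠ p) :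
    s.Sound B input (Function.update ν (B.node d p) N) q := by
  have hmono {e : ℕ} {w : Bool} : outcomeAt B input ν e q = some w → _ :=
    outcomeAt_mono hmove.toExtends.update
  cases s with
  | decided w => exact hmono h
  | busy e w ph =>
    refine ⟨h.1, hmono h.2.1, ?_⟩
    by_cases hnode : B.node e q = B.node d p
    · obtain rfl := B.depth_eq hnode
      have hrole : B.role e q ≠ B.role e p := fun hr => hq (B.eq_of_role_eq hnode hr)
      rw [hnode, Function.update_self]
      exact hmove.sound_of_ne _ hrole ph (hnode ▸ h.2.2)
    · rw [Function.update_of_ne hnode]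
      exact h.2.2

lemma sound_resume {ph : Phase ⊕ Bool} (hd : d < n)
    (hv : outcomeAt B input ν (d + 1) p = some v)
    (hph : NodeState.ResultSound R (ν (B.node d p)) (B.role d p) ph) :
    (resume d v ph).Sound B input ν p := by
  cases ph with
  | inl ph => exact ⟨hd, hv, hph⟩
  | inr w =>
    cases d with
    | zero => exact (outcomeAt_of_lt hd).trans hph
    | succ d => exact ⟨d.lt_succ_self.trans hd, (outcomeAt_of_lt hd).trans hph, trivial⟩

lemma sound_init (b : Bool) (hb : b = input p) :
    (busy (n - 1) b .announce).Sound B input ν p := by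
  have hn : 0 < n := p.pos
  refine ⟨by omega, ?_, trivial⟩
  rw [outcomeAt, if_neg (by omega), hb]

namespace TournamentInvariant

lemma update_state (h : TournamentInvariant B input ν s) {t : TournamentState}
    (ht : t.Sound B input ν p) : TournamentInvariant B input ν (Function.update s p t) := by
  refine { h with sound := fun q => ?_ }
  by_cases hq : q = p
  · subst hq
    rwa [Function.update_self]
  · rw [Function.update_of_ne hq]
    exact h.sound q

lemma update_node (h : TournamentInvariant B input ν s) (hd : d < n)
    (hv : outcomeAt B input ν (d + 1) p = some v)
    (hmove : NodeState.Move R (B.role d p) v (ν (B.node d p)) N) {t : TournamentState}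
    (ht : t.Sound B input (Function.update ν (B.node d p) N) p) :
    TournamentInvariant B input (Function.update ν (B.node d p) N) (Function.update s p t) where
  valid nd := by
    by_cases hnd : nd = B.node d p
    · rw [hnd, Function.update_self]
      exact hmove.valid
    · rw [Function.update_of_ne hnd]
      exact h.valid nd
  register_origin nd x w hw := by
    suffices ∃ e q, e < n ∧ B.node e q = nd ∧ R.team (B.role e q) = x ∧
        outcomeAt B input ν (e + 1) q = some w by
      obtain ⟨e, q, he, hnode, hx, hw⟩ := this
      exact ⟨e, q, he, hnode, hx, outcomeAt_mono hmove.toExtends.update hw⟩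
    by_cases hnd : nd = B.node d p
    · rw [hnd, Function.update_self] at hw
      rcases hmove.register_origin x w hw with hold | ⟨hx, hnew⟩
      · exact h.register_origin nd x w (hnd ▸ hold)
      · exact ⟨d, p, hd, hnd.symm, hx.symm, hnew ▸ hv⟩
    · rw [Function.update_of_ne hnd] at hw
      exact h.register_origin nd x w hw
  sound q := by
    by_cases hq : q = p
    · subst hq
      rwa [Function.update_self]
    · rw [Function.update_of_ne hq]
      exact (h.sound q).update_of_ne hmove hq

lemma eq_of_register (h : TournamentInvariant B input ν s)
    (hv : outcomeAt B input ν (d + 1) p = some v)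
    (hw : (ν (B.node d p)).register (R.team (B.role d p)) = some w) : w = v := by
  obtain ⟨e, q, -, hnode, hteam, hq⟩ := h.register_origin _ _ _ hw
  obtain rfl := B.depth_eq hnode
  rw [outcomeAt_congr (B.node_succ hnode hteam), hv] at hq
  exact (Option.some.inj hq).symm

lemma exists_input_eq (h : TournamentInvariant B input ν s) {d : ℕ} {p : Fin n} {w : Bool}
    (hw : outcomeAt B input ν d p = some w) : ∃ q, input q = w := by
  by_cases hd : d < n
  · rw [outcomeAt_of_lt hd] at hw
    obtain ⟨x, -, hx⟩ := Option.bind_eq_some_iff.1 hw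
    obtain ⟨e, q, -, hnode, -, hq⟩ := h.register_origin _ _ _ hx
    obtain rfl := (B.depth_eq hnode).symm
    exact h.exists_input_eq hq
  · exact ⟨p, Option.some.inj ((if_neg hd).symm.trans hw)⟩
termination_by n - d
decreasing_by omega

end TournamentInvariant

/-- The configuration `C` satisfies the invariant when the auxiliary variables are given by `ν`. -/
structure Represents (ν : List Bool → NodeState n T) (C : Config (tournament R B))
    (input : Fin n → Bool) : Prop where
  contents_eq : contents C.oval = fun nd => (ν nd).toNodeContents
  invariant : TournamentInvariant B input ν C.pstate

lemma represents_initConfig :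
    Represents (fun _ => R.initialNode) (initConfig (tournament R B) input) input where
  contents_eq := rfl
  invariant :=
    { valid := fun _ => R.valid_initialNode
      register_origin := nofun
      sound := fun _ => sound_init _ rfl }

namespace Represents

variable {C : Config (tournament R B)}

lemma exists_step (h : Represents ν C input) (p : Fin n) :
    ∃ ν', (∀ nd, (ν nd).Extends (ν' nd)) ∧
      Represents ν' (applyEvent (tournament R B) input C (.step p)) input := by
  cases hs : C.pstate p with
  | decided w =>
    have hpending : (tournament R B).pending p (C.pstate p) = none := by
      rw [hs]
      rfl
    rw [applyEvent_of_pending_none input hpending]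
    exact ⟨ν, fun _ => ⟨fun _ _ h => h, fun _ h => h⟩, h⟩
  | busy d v ph =>
    obtain ⟨hd, hv, hph⟩ : (busy d v ph).Sound B input ν p := hs ▸ h.invariant.sound p
    obtain ⟨N, hN, hmove, hres⟩ := (h.invariant.valid (B.node d p)).exists_move hph
      fun w hw => h.invariant.eq_of_register hv hw
    obtain ⟨hpstate, hoval⟩ := applyEvent_busy (input := input) hs
    have hext := hmove.toExtends.update
    rw [h.contents_eq] at hpstate hoval
    refine ⟨_, hext, ?_, ?_⟩
    · rw [hoval, ← hN]
      exact (Function.comp_update NodeState.toNodeContents ν _ N).symm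
    · rw [hpstate]
      refine h.invariant.update_node hd hv hmove (sound_resume hd (outcomeAt_mono hext hv) ?_)
      rwa [Function.update_self]

lemma exists_applyEvent (h : Represents ν C input) (e : Event n) :
    ∃ ν', (∀ nd, (ν nd).Extends (ν' nd)) ∧
      Represents ν' (applyEvent (tournament R B) input C e) input := by
  cases e with
  | step p => exact h.exists_step p
  | crash p =>
    exact ⟨ν, fun _ => ⟨fun _ _ h => h, fun _ h => h⟩, h.contents_eq,
      h.invariant.update_state (sound_init _ rfl)⟩

lemma outcomeAt_zero_eq (h : Represents ν C input)
    (hw : (tournament R B).output p (C.pstate p) = some w) :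
    outcomeAt B input ν 0 p = some w := by
  have hsound := h.invariant.sound p
  cases hs : C.pstate p with
  | decided w' =>
    rw [hs] at hw hsound
    exact hsound.trans hw
  | busy d v ph =>
    rw [hs] at hw
    exact absurd hw nofun

end Represents

lemma exists_represents_run (B : Bracket R.team) (input : Fin n → Bool) (σ : List (Event n)) :
    ∃ ν, Represents ν (run (tournament R B) input (initConfig _ input) σ) input ∧
      ∀ p w, HasDecided (tournament R B) input (initConfig _ input) σ p w →
        outcomeAt B input ν 0 p = some w := by
  induction σ using List.reverseRecOn with
  | nil =>
    refine ⟨_, represents_initConfig, fun p w => ?_⟩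
    rintro ⟨τ, hτ, hw⟩
    rw [List.prefix_nil.1 hτ] at hw
    exact represents_initConfig.outcomeAt_zero_eq hw
  | append_singleton σ e ih =>
    obtain ⟨ν, hν, hdec⟩ := ih
    obtain ⟨ν', hext, hν'⟩ := hν.exists_applyEvent e
    have hrun :
        Represents ν' (run (tournament R B) input (initConfig _ input) (σ ++ [e])) input := by
      rwa [run_append]
    refine ⟨ν', hrun, fun p w => ?_⟩
    rintro ⟨τ, hτ, hw⟩
    rcases List.prefix_concat_iff.1 hτ with rfl | hτ
    · exact hrun.outcomeAt_zero_eq hw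
    · exact outcomeAt_mono hext (hdec p w ⟨τ, hτ, hw⟩)

variable (B)

lemma agreement_tournament : Agreement (tournament R B) := by
  intro input σ p q v w hv hw
  obtain ⟨ν, -, hdec⟩ := exists_represents_run B input σ
  have hroot : B.node 0 p = B.node 0 q := by
    rw [List.eq_nil_of_length_eq_zero (B.length_node 0 p),
      List.eq_nil_of_length_eq_zero (B.length_node 0 q)]
  rw [← Option.some_inj, ← hdec p v hv, ← hdec q w hw, outcomeAt_congr hroot]

lemma validity_tournament : Validity (tournament R B) := by
  intro input σ p w hw
  obtain ⟨ν, hν, hdec⟩ := exists_represents_run B input σ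
  exact hν.invariant.exists_input_eq (hdec p w hw)

end Invariant

section WaitFreedom

lemma recWaitFree_of_rank {A : Algorithm n} (rank : ∀ i, A.PState i → ℕ)
    (hrank : ∀ input (C : Config A) i, A.output i (C.pstate i) = none →
      rank i ((applyEvent A input C (.step i)).pstate i) < rank i (C.pstate i)) :
    RecWaitFree A := by
  rintro input C e i - hsteps ⟨m, hm⟩
  by_contra! hundecided
  let C' (k : ℕ) : Config A := run A input C (initSeg e k)
  let f (k : ℕ) : ℕ := rank i ((C' k).pstate i)
  have hsucc (k : ℕ) : C' (k + 1) = applyEvent A input (C' k) (e k) := by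
    simp only [C', initSeg, List.range_succ, List.map_append, run_append]
    rfl
  have hstep (k : ℕ) (hk : e k = .step i) : f (k + 1) < f k := by
    simp only [f, hsucc, hk]
    exact hrank input (C' k) i (Option.eq_none_iff_forall_ne_some.2 (hundecided k))
  have hanti : AntitoneOn f (Set.Ici m) := by
    refine antitoneOn_of_succ_le Set.ordConnected_Ici fun k _ hk _ => ?_
    by_cases hstep_i : e k = .step i
    · exact (hstep k hstep_i).le
    · have hother : ¬ eventBy {i} (e k) := by
        intro h
        cases hek : e k with
        | step j => exact hstep_i (by rw [hek] at h ⊢; exact congrArg _ h)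
        | crash j => exact hm k hk (by rw [hek] at h ⊢; exact congrArg _ h)
      simp only [f, Order.succ_eq_add_one, hsucc, applyEvent_pstate_of_not_eventBy input hother,
        le_refl]
  obtain ⟨k, hk, hmin⟩ := exists_minimalFor_of_wellFoundedLT (m ≤ ·) f ⟨m, le_rfl⟩
  obtain ⟨l, hkl, hl⟩ := hsteps k
  have hlt : f (l + 1) < f k :=
    (hstep l hl).trans_le (hanti hk (Set.mem_Ici.2 (hk.trans hkl)) hkl)
  exact hlt.not_ge (hmin (hk.trans (hkl.trans l.le_succ)) hlt.le)

/-- A bound on the number of steps that a process still takes at its node. -/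
def Phase.rank : Phase → ℕ
  | announce => 6
  | look => 5
  | check => 4
  | record => 3
  | relook => 2
  | fetch _ => 1

/-- A bound on the number of steps that a process still takes until it decides. -/
def TournamentState.rank : TournamentState → ℕ
  | decided _ => 0
  | busy d _ ph => 6 * d + ph.rank

lemma rank_leave_le (d : ℕ) (w : Bool) : (leave d w).rank ≤ 6 * d := by
  cases d with
  | zero => exact le_rfl
  | succ d => exact le_rfl

lemma rank_resume_step_lt (R : ReadableRecording n T) (r : Fin n) (d : ℕ) (v : Bool) (ph : Phase)
    (N : NodeContents T) : (resume d v (R.step r v ph N).1).rank < (busy d v ph).rank := by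
  cases ph with
  | announce => simp [ReadableRecording.step, Phase.afterRegister, resume, rank, Phase.rank]
  | look =>
    simp only [ReadableRecording.step, ReadableRecording.afterObject]
    split_ifs <;> simp [resume, rank, Phase.rank]
  | check =>
    cases hreg : N.register (!R.team r) with
    | none => simp [ReadableRecording.step, Phase.afterRegister, hreg, resume, rank, Phase.rank]
    | some w =>
      simp only [ReadableRecording.step, Phase.afterRegister, hreg, resume]
      exact (rank_leave_le d w).trans_lt (by simp [rank, Phase.rank])
  | record => simp [ReadableRecording.step, ReadableRecording.afterObject, resume, rank, Phase.rank]
  | relook => simp [ReadableRecording.step, ReadableRecording.afterObject, resume, rank, Phase.rank]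
  | fetch y =>
    simp only [ReadableRecording.step, Phase.afterRegister, resume]
    exact (rank_leave_le d _).trans_lt (by simp [rank, Phase.rank])

lemma recWaitFree_tournament {R : ReadableRecording n T} (B : Bracket R.team) :
    RecWaitFree (tournament R B) := by
  refine recWaitFree_of_rank (fun _ => TournamentState.rank) fun input C p hp => ?_
  cases hs : C.pstate p with
  | decided w =>
    rw [hs] at hp
    exact absurd hp nofun
  | busy d v ph =>
    have hstate := (congrFun (applyEvent_busy (input := input) hs).1 p).trans
      (Function.update_self p _ _)
    rw [hstate]
    exact rank_resume_step_lt ..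

end WaitFreedom

lemma ReadableRecording.recConsensusNumberGe (R : ReadableRecording n T)
    (hteam : Function.Surjective R.team) : RecConsensusNumberGe n T := by
  obtain ⟨B⟩ := nonempty_bracket hteam
  refine ⟨tournament R B, fun o => ?_, agreement_tournament B, validity_tournament B,
    recWaitFree_tournament B⟩
  cases o with
  | recorder nd => exact Or.inl rfl
  | register nd x => exact Or.inr ⟨_, rfl⟩

lemma NRecording.recConsensusNumberGe (h : NRecording n T) (hread : Readable T) :
    RecConsensusNumberGe n T := by
  obtain ⟨u, team, o, hteam, hdisjoint, hunique⟩ := h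
  obtain ⟨read, encode, hinjective, hread⟩ := hread
  exact ReadableRecording.recConsensusNumberGe
    { read := read
      encode := encode
      encode_injective := hinjective
      δ_read := hread
      initial := u
      team := team
      op := o
      disjoint := inter_eq_empty_iff_forall_bool.1 hdisjoint
      role_unique := fun x hx i j hi hj =>
        (hunique _ hx).unique (hi.trans x.not_not.symm) (hj.trans x.not_not.symm) } hteam

end RecoverableConsensus

open RecoverableConsensus in
theorem recoverable_hierarchy_robust_for_readable_general {ι : Type*} {n : ℕ} (hn : 1 < n)
    (T : ι → DetType) (hread : ∀ k, Readable (T k)) (A : Algorithm n)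
    (hT : ∀ o, (∃ k, A.objType o = T k) ∨ IsRegister (A.objType o))
    (hA : SolvesRecConsensus A) : ∃ k, RecConsensusNumberGe n (T k) := by
  obtain ⟨o, ho⟩ := hA.exists_nRecording hn
  rcases hT o with ⟨k, hk⟩ | ⟨V, hV⟩
  · rw [hk] at ho
    exact ⟨k, ho.recConsensusNumberGe (hread k)⟩
  · rw [hV] at ho
    exact absurd ho (not_nRecording_registerType n V)

open RecoverableConsensus in
/-- If there exists a recoverable wait-free binary consensus algorithm for
`n > 1` processes using objects of deterministic readable types `𝒯_0, 𝒯_1, 𝒯_2, …` together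
with registers, then at least one of the types `𝒯_k` has recoverable consensus number at
least `n`; i.e. the recoverable consensus hierarchy is robust for deterministic readable
types. -/
theorem recoverable_hierarchy_robust_for_readable
    (n : ℕ) (hn : 1 < n) (T : ℕ → DetType) (hread : ∀ k : ℕ, Readable (T k))
    (A : Algorithm n)
    (hT : ∀ o : A.ObjIdx, (∃ k : ℕ, A.objType o = T k) ∨ IsRegister (A.objType o))
    (hA : SolvesRecConsensus A) :
    ∃ k : ℕ, RecConsensusNumberGe n (T k) :=
  recoverable_hierarchy_robust_for_readable_general hn T hread A hT hA
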